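/- Let μ > 0 and let γ₁ be a closed regular curve in S² with min κ₁ > μ whose restriction to [a₁,b₁] is a negative shell with image Σ₁. Let C be a μ-circle such that Σ₁ lies in the closure of the interior domain of C and C ∩ Σ₁ = {P, Q} with P = γ₁(d₁), Q = γ₁(c₁), where a₁ < c₁ < d₁ < b₁. For t ∈ [d₁,b₁] let Ĉ_t be the tangent μ-circle to γ₁ at γ₁(t) on the normal side. Suppose X = γ₁(x) ∈ Ĉ_t for some x ∈ [d₁,b₁] with x ≠ t. If t < x ≤ b₁ (resp. d₁ ≤ x < t), then the subarc of Ĉ_t starting at γ₁(t) in the direction of γ₁'(t) and ending at X (resp. starting at X and ending at γ₁(t), traversed in the same rotational direction) meets the circle C in exactly two points. -/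

import Mathlib

noncomputable section

open Matrix

/-- Euclidean 3-space (as triples of reals). -/
abbrev R3 : Type := Fin 3 → ℝ

/-- The Euclidean inner product on ℝ³. -/
def dot3 (a b : R3) : ℝ := a 0 * b 0 + a 1 * b 1 + a 2 * b 2

/-- The Euclidean norm on ℝ³. -/
def norm3 (a : R3) : ℝ := Real.sqrt (dot3 a a)

/-- The cross product on ℝ³. -/
def cross3 (a b : R3) : R3 :=
  ![a 1 * b 2 - a 2 * b 1, a 2 * b 0 - a 0 * b 2, a 0 * b 1 - a 1 * b 0]

/-- The determinant of three vectors in ℝ³. -/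
def det3 (a b c : R3) : ℝ := dot3 a (cross3 b c)

/-- `γ : ℝ → ℝ³` is a regular curve in the unit sphere S²:
it is smooth, takes values in S², and has nowhere-vanishing derivative. -/
structure IsRegularCurve (γ : ℝ → R3) : Prop where
  smooth : ContDiff ℝ (⊤ : ℕ∞) γ
  sphere : ∀ s, dot3 (γ s) (γ s) = 1
  reg : ∀ s, deriv γ s ≠ 0

/-- The geodesic curvature `κ(s) = det(γ, γ', γ'')/|γ'|³` of a curve in S². -/
def kappa (γ : ℝ → R3) (s : ℝ) : ℝ :=
  det3 (γ s) (deriv γ s) (deriv (deriv γ) s) / norm3 (deriv γ s) ^ 3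

/-- The unit normal `n(s) = (γ × γ')/|γ'|` of a curve in S². -/
def unitNormal (γ : ℝ → R3) (s : ℝ) : R3 :=
  (norm3 (deriv γ s))⁻¹ • cross3 (γ s) (deriv γ s)

/-- `γ` is closed of period `l > 0`. -/
def HasPeriod (γ : ℝ → R3) (l : ℝ) : Prop := 0 < l ∧ ∀ s, γ (s + l) = γ s

/-- 2×2 complex matrices. -/
abbrev Mat2 := Matrix (Fin 2) (Fin 2) ℂ

def E1 : Mat2 := !![0, Complex.I; Complex.I, 0]
def E2 : Mat2 := !![0, -1; 1, 0]
def E3 : Mat2 := !![Complex.I, 0; 0, -Complex.I]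

/-- The identification of ℝ³ with su(2) via the orthonormal basis e₁, e₂, e₃. -/
def toSu2 (v : R3) : Mat2 := (v 0 : ℂ) • E1 + (v 1 : ℂ) • E2 + (v 2 : ℂ) • E3

/-- The adjoint action `Ad(a)x = a x a⁻¹`. -/
def AdM (a x : Mat2) : Mat2 := a * x * a⁻¹

/-- `c : ℝ → SU(2)` is a lift of the regular curve `γ` in S²:
it is smooth (entrywise), takes values in SU(2), and satisfies
`Ad(c(s))e₃ = γ(s)` and `Ad(c(s))e₁ = γ'(s)/|γ'(s)|` under `toSu2`. -/
structure IsLift (γ : ℝ → R3) (c : ℝ → Mat2) : Prop where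
  mem : ∀ s, c s ∈ Matrix.specialUnitaryGroup (Fin 2) ℂ
  smooth : ∀ i j, ContDiff ℝ (⊤ : ℕ∞) fun s => c s i j
  ad3 : ∀ s, AdM (c s) E3 = toSu2 (γ s)
  ad1 : ∀ s, AdM (c s) E1 = toSu2 ((norm3 (deriv γ s))⁻¹ • deriv γ s)

/-- The entrywise derivative of a matrix-valued curve. -/
def matDeriv (c : ℝ → Mat2) (s : ℝ) : Mat2 :=
  Matrix.of fun i j => deriv (fun t => c t i j) s

/-- The map `f_{γ₁,γ₂}(s₁,s₂) = c₁(0)⁻¹ c₁(s₁) c₂(s₂)⁻¹ c₂(0)` associated to lifts `c₁, c₂`. -/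
def fmap (c1 c2 : ℝ → Mat2) (s1 s2 : ℝ) : Mat2 :=
  (c1 0)⁻¹ * c1 s1 * (c2 s2)⁻¹ * c2 0

/-- `(γ₁, γ₂)` is an admissible pair. -/
structure IsAdmissiblePair (γ1 γ2 : ℝ → R3) : Prop where
  reg1 : IsRegularCurve γ1
  reg2 : IsRegularCurve γ2
  param1 : ∀ s, norm3 (deriv γ1 s) ^ 2 * (1 + kappa γ1 s ^ 2) = 4
  param2 : ∀ s, norm3 (deriv γ2 s) ^ 2 * (1 + kappa γ2 s ^ 2) = 4
  curv : ∀ s1 s2, kappa γ2 s2 < kappa γ1 s1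

/-- The restriction of `γ` to `[a,b]` is a shell. -/
def IsShell (γ : ℝ → R3) (a b : ℝ) : Prop :=
  a < b ∧ Set.InjOn γ (Set.Ico a b) ∧ γ a = γ b ∧
    LinearIndependent ℝ ![deriv γ a, deriv γ b]

/-- A positive shell: `det(γ(a), γ'(a), γ'(b)) < 0`. -/
def IsPositiveShell (γ : ℝ → R3) (a b : ℝ) : Prop :=
  IsShell γ a b ∧ det3 (γ a) (deriv γ a) (deriv γ b) < 0

/-- A negative shell: `det(γ(a), γ'(a), γ'(b)) > 0`. -/
def IsNegativeShell (γ : ℝ → R3) (a b : ℝ) : Prop :=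
  IsShell γ a b ∧ 0 < det3 (γ a) (deriv γ a) (deriv γ b)

/-- The unit sphere S² in ℝ³. -/
def sphere2 : Set R3 := {x | dot3 x x = 1}

/-- The μ-circle with center `o ∈ S²`. -/
def muCircle (μ : ℝ) (o : R3) : Set R3 :=
  {x | dot3 x x = 1 ∧ dot3 x o = μ / Real.sqrt (1 + μ ^ 2)}

/-- The (open) interior domain of the μ-circle with center `o ∈ S²`. -/
def muDisk (μ : ℝ) (o : R3) : Set R3 :=
  {x | dot3 x x = 1 ∧ μ / Real.sqrt (1 + μ ^ 2) < dot3 x o}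

def normalize3 (v : R3) : R3 := (norm3 v)⁻¹ • v

/-- `Δ` is the interior domain of the shell `γ|_{[a,b]}`: it is a connected component of the
complement of the image of the shell in S², and for each `s ∈ (a,b)` the points obtained by
pushing `γ(s)` slightly in the direction `σ • n(s)` (σ = 1 for a positive shell, σ = -1 for a
negative shell) belong to `Δ`. -/
def IsInteriorDomain (γ : ℝ → R3) (a b σ : ℝ) (Δ : Set R3) : Prop :=
  (∃ p ∈ sphere2 \ γ '' Set.Icc a b,
      Δ = connectedComponentIn (sphere2 \ γ '' Set.Icc a b) p) ∧
    ∀ s ∈ Set.Ioo a b, ∃ ε > 0, ∀ δ ∈ Set.Ioo (0 : ℝ) ε,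
      normalize3 (γ s + (σ * δ) • unitNormal γ s) ∈ Δ

/-- The center `o_t = (μ γ(t) + n(t))/√(1+μ²)` of the tangent μ-circle to `γ` at `γ(t)`
on the normal side. -/
def tangentCenter (μ : ℝ) (γ : ℝ → R3) (t : ℝ) : R3 :=
  (Real.sqrt (1 + μ ^ 2))⁻¹ • (μ • γ t + unitNormal γ t)

/-- The rotation of ℝ³ through angle `θ` about the oriented (unit) axis `o`. -/
def rot3 (o : R3) (θ : ℝ) (x : R3) : R3 :=
  Real.cos θ • x + Real.sin θ • cross3 o x + ((1 - Real.cos θ) * dot3 o x) • o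

/-- A closed regular curve of period `l` is generic: every self-intersection is a
transversal double point. -/
def IsGeneric (γ : ℝ → R3) (l : ℝ) : Prop :=
  ∀ s t : ℝ, γ s = γ t → (¬∃ k : ℤ, s - t = k * l) →
    LinearIndependent ℝ ![deriv γ s, deriv γ t] ∧
      ∀ u : ℝ, γ u = γ s → (∃ k : ℤ, u - s = k * l) ∨ (∃ k : ℤ, u - t = k * l)

/-- The number of crossings (self-intersection points) of a closed curve of period `l`. -/
def crossings (γ : ℝ → R3) (l : ℝ) : ℕ :=
  Set.ncard {p : R3 | ∃ s t : ℝ, γ s = p ∧ γ t = p ∧ ¬∃ k : ℤ, s - t = k * l}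

/-- The spherical (geodesic) distance on S³, identified with SU(2):
`dist(A,B) = arccos(Re trace(A Bᴴ)/2)`, which corresponds to the round distance on the
unit sphere S³ ⊂ ℝ⁴. -/
def distS3 (A B : Mat2) : ℝ := Real.arccos ((Matrix.trace (A * Bᴴ)).re / 2)

/-- The extrinsic diameter of the image of the map `f` associated to the lifts `c₁, c₂`. -/
def extDiam (c1 c2 : ℝ → Mat2) : ℝ :=
  sSup {d : ℝ | ∃ s1 s2 u1 u2 : ℝ, d = distS3 (fmap c1 c2 s1 s2) (fmap c1 c2 u1 u2)}

/-- The parallel curve `γ^θ = (cos θ) γ + (sin θ) n`. -/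
def parallelCurve (γ : ℝ → R3) (θ : ℝ) (s : ℝ) : R3 :=
  Real.cos θ • γ s + Real.sin θ • unitNormal γ s

/-- The arclength-type parameter `s(t) = (1/2)∫₀ᵗ |γ'(u)|√(1+κ(u)²) du`. -/
def arcParam (γ : ℝ → R3) (t : ℝ) : ℝ :=
  (1 / 2) * ∫ u in (0 : ℝ)..t, norm3 (deriv γ u) * Real.sqrt (1 + kappa γ u ^ 2)

lemma hasDerivAt_dot3 {f g : ℝ → R3} {f' g' : R3} {s : ℝ} (hf : HasDerivAt f f' s)
    (hg : HasDerivAt g g' s) :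
    HasDerivAt (fun s => dot3 (f s) (g s)) (dot3 f' (g s) + dot3 (f s) g') s := by
  rw [hasDerivAt_pi] at hf hg
  have h := (((hf 0).mul (hg 0)).add ((hf 1).mul (hg 1))).add ((hf 2).mul (hg 2))
  refine h.congr_deriv ?_
  simp only [dot3]
  ring

lemma hasDerivAt_dot3_left {f : ℝ → R3} {f' : R3} {s : ℝ} (hf : HasDerivAt f f' s) (a : R3) :
    HasDerivAt (fun s => dot3 (f s) a) (dot3 f' a) s := by
  refine (hasDerivAt_dot3 hf (hasDerivAt_const s a)).congr_deriv ?_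
  simp [dot3]

lemma hasDerivAt_dot3_right {f : ℝ → R3} {f' : R3} {s : ℝ} (hf : HasDerivAt f f' s) (a : R3) :
    HasDerivAt (fun s => dot3 a (f s)) (dot3 a f') s := by
  refine (hasDerivAt_dot3 (hasDerivAt_const s a) hf).congr_deriv ?_
  simp [dot3]

lemma Continuous.dot3 {X : Type*} [TopologicalSpace X] {f g : X → R3} (hf : Continuous f)
    (hg : Continuous g) : Continuous fun x => dot3 (f x) (g x) := by
  unfold _root_.dot3
  fun_prop

lemma Continuous.cross3 {X : Type*} [TopologicalSpace X] {f g : X → R3} (hf : Continuous f)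
    (hg : Continuous g) : Continuous fun x => cross3 (f x) (g x) := by
  unfold _root_.cross3
  refine continuous_pi fun i => ?_
  fin_cases i <;> simp <;> fun_prop

lemma dot3_comm (a b : R3) : dot3 a b = dot3 b a := by
  simp only [dot3]; ring

lemma dot3_smul_left (c : ℝ) (a b : R3) : dot3 (c • a) b = c * dot3 a b := by
  simp [dot3]; ring

lemma dot3_smul_right (c : ℝ) (a b : R3) : dot3 a (c • b) = c * dot3 a b := by
  simp [dot3]; ring

lemma dot3_add_left (a b c : R3) : dot3 (a + b) c = dot3 a c + dot3 b c := by
  simp [dot3]; ring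

lemma dot3_add_right (a b c : R3) : dot3 a (b + c) = dot3 a b + dot3 a c := by
  simp [dot3]; ring

lemma dot3_sub_left (a b c : R3) : dot3 (a - b) c = dot3 a c - dot3 b c := by
  simp [dot3]; ring

lemma dot3_sub_right (a b c : R3) : dot3 a (b - c) = dot3 a b - dot3 a c := by
  simp [dot3]; ring

lemma dot3_self_nonneg (a : R3) : 0 ≤ dot3 a a := by
  simp only [dot3]; nlinarith [sq_nonneg (a 0), sq_nonneg (a 1), sq_nonneg (a 2)]

lemma eq_zero_of_dot3_self {a : R3} (h : dot3 a a = 0) : a = 0 := by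
  simp only [dot3] at h
  ext i
  fin_cases i <;> simp <;> nlinarith [sq_nonneg (a 0), sq_nonneg (a 1), sq_nonneg (a 2)]

lemma dot3_self_pos {a : R3} (h : a ≠ 0) : 0 < dot3 a a :=
  (dot3_self_nonneg a).lt_of_ne fun h0 => h (eq_zero_of_dot3_self h0.symm)

lemma dot3_sub_self (a b : R3) :
    dot3 (a - b) (a - b) = dot3 a a - 2 * dot3 a b + dot3 b b := by
  simp [dot3]; ring

lemma eq_of_dot3_eq_one {a b : R3} (ha : dot3 a a = 1) (hb : dot3 b b = 1) (h : dot3 a b = 1) :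
    a = b := by
  refine sub_eq_zero.1 (eq_zero_of_dot3_self ?_)
  rw [dot3_sub_self, ha, hb, h]; norm_num

lemma dot3_lt_one {a b : R3} (ha : dot3 a a = 1) (hb : dot3 b b = 1) (h : a ≠ b) :
    dot3 a b < 1 := by
  have := dot3_self_pos (sub_ne_zero.2 h)
  rw [dot3_sub_self, ha, hb] at this
  linarith

lemma dot3_le_one {a b : R3} (ha : dot3 a a = 1) (hb : dot3 b b = 1) : dot3 a b ≤ 1 := by
  have := dot3_self_nonneg (a - b)
  rw [dot3_sub_self, ha, hb] at this
  linarith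

/-- A vector times a determinant, expanded by Cramer's rule. -/
lemma det3_mul_dot3 (a b c v w : R3) :
    det3 a b c * dot3 v w = dot3 v a * det3 w b c + dot3 v b * det3 a w c
      + dot3 v c * det3 a b w := by
  simp [det3, dot3, cross3]; ring

lemma det3_eq_zero_of_orthogonal {a b c v : R3} (hv : 0 < dot3 v v) (ha : dot3 v a = 0)
    (hb : dot3 v b = 0) (hc : dot3 v c = 0) : det3 a b c = 0 := by
  have := det3_mul_dot3 a b c v v
  rw [ha, hb, hc] at this
  have h : det3 a b c * dot3 v v = 0 := by linarith
  exact (mul_eq_zero.1 h).resolve_right hv.ne'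

lemma det3_sq (a b c : R3) : det3 a b c ^ 2 =
    dot3 a a * dot3 b b * dot3 c c + 2 * dot3 a b * dot3 b c * dot3 a c
      - dot3 a a * dot3 b c ^ 2 - dot3 b b * dot3 a c ^ 2 - dot3 c c * dot3 a b ^ 2 := by
  simp [det3, dot3, cross3]; ring

/-- Two points of a circle centred at `p` that are coplanar with `p` are equal or diametrically
opposite. -/
lemma eq_or_eq_reflect {p a b : R3} {h : ℝ} (hp : dot3 p p = 1) (ha : dot3 a a = 1)
    (hb : dot3 b b = 1) (hpa : dot3 a p = h) (hpb : dot3 b p = h) (hdet : det3 a p b = 0) :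
    a = b ∨ a = (2 * h) • p - b := by
  have h1 := det3_sq a p b
  rw [hdet, hp, ha, hb, hpa, dot3_comm p b, hpb] at h1
  have h2 : (1 - dot3 a b) * (1 + dot3 a b - 2 * h ^ 2) = 0 := by linarith
  rcases mul_eq_zero.1 h2 with h3 | h3
  · exact Or.inl (eq_of_dot3_eq_one ha hb (by linarith))
  · refine Or.inr (sub_eq_zero.1 (eq_zero_of_dot3_self ?_))
    have : dot3 (a - ((2 * h) • p - b)) (a - ((2 * h) • p - b)) = dot3 a a + dot3 b b
      + 4 * h ^ 2 * dot3 p p + 2 * dot3 a b - 4 * h * dot3 a p - 4 * h * dot3 b p := by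
      simp [dot3]; ring
    rw [this, ha, hb, hp, hpa, hpb]
    linear_combination 2 * h3

/-- A zero of a function of two variables whose partial derivatives have opposite signs can be
moved so as to increase both variables. -/
lemma exists_zero_above {f : ℝ → ℝ → ℝ} (hf : Continuous fun p : ℝ × ℝ => f p.1 p.2)
    {s u p q : ℝ} (h0 : f s u = 0) (hp : HasDerivAt (fun s' => f s' u) p s)
    (hq : HasDerivAt (fun u' => f s u') q u) (hpq : p * q < 0) {P : ℝ × ℝ → Prop}
    (hP : ∀ᶠ z in nhds (s, u), P z) :
    ∃ e₁ e₂ : ℝ, 0 ≤ e₁ ∧ 0 ≤ e₂ ∧ 0 < e₁ + e₂ ∧ f (s + e₁) (u + e₂) = 0 ∧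
      P (s + e₁, u + e₂) := by
  wlog hpos : 0 < p generalizing f p q
  · have hp0 : p < 0 := lt_of_le_of_ne (not_lt.1 hpos) (by rintro rfl; simp at hpq)
    obtain ⟨e₁, e₂, h1, h2, h3, h4, h5⟩ := this (f := fun s u => -f s u) hf.neg
      (by simp [h0]) hp.neg hq.neg (by linarith) (by linarith)
    exact ⟨e₁, e₂, h1, h2, h3, by simpa using h4, h5⟩
  have hq0 : q < 0 := by nlinarith
  rw [Metric.eventually_nhds_iff] at hP
  obtain ⟨ε, hε, hP⟩ := hP
  have key1 : ∀ᶠ e in nhdsWithin (0 : ℝ) (Set.Ioi 0), 0 < f (s + e) u := by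
    have h := (hasDerivAt_iff_tendsto_slope_zero.1 hp).mono_left
      (nhdsWithin_mono (0 : ℝ) (fun x (hx : 0 < x) => hx.ne') : nhdsWithin (0 : ℝ) (Set.Ioi 0) ≤ _)
    filter_upwards [h.eventually (lt_mem_nhds hpos), self_mem_nhdsWithin] with e he hpe
    simp only [h0, sub_zero, smul_eq_mul] at he
    exact pos_of_mul_pos_right he (inv_nonneg.2 (le_of_lt hpe))
  have key2 : ∀ᶠ e in nhdsWithin (0 : ℝ) (Set.Ioi 0), f s (u + e) < 0 := by
    have h := (hasDerivAt_iff_tendsto_slope_zero.1 hq).mono_left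
      (nhdsWithin_mono (0 : ℝ) (fun x (hx : 0 < x) => hx.ne') : nhdsWithin (0 : ℝ) (Set.Ioi 0) ≤ _)
    filter_upwards [h.eventually (gt_mem_nhds hq0), self_mem_nhdsWithin] with e he hpe
    simp only [h0, sub_zero, smul_eq_mul] at he
    have hpe' : (0 : ℝ) < e⁻¹ := inv_pos.2 hpe
    by_contra hcon
    nlinarith [mul_nonneg hpe'.le (not_lt.1 hcon)]
  have key3 : ∀ᶠ e in nhdsWithin (0 : ℝ) (Set.Ioi 0), 0 < e := self_mem_nhdsWithin
  have key4 : ∀ᶠ e in nhdsWithin (0 : ℝ) (Set.Ioi 0), e < ε :=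
    nhdsWithin_le_nhds (gt_mem_nhds hε)
  obtain ⟨e, he1, he2, he0', heε⟩ := (key1.and (key2.and (key3.and key4))).exists
  have hc : Continuous fun τ : ℝ => f (s + e * (1 - τ)) (u + e * τ) :=
    hf.comp (f := fun τ : ℝ => (s + e * (1 - τ), u + e * τ)) (by fun_prop)
  obtain ⟨τ, ⟨hτ0, hτ1⟩, hτ⟩ := intermediate_value_Icc' zero_le_one hc.continuousOn
    (show (0 : ℝ) ∈ Set.Icc _ _ from ⟨by simpa using he2.le, by simpa using he1.le⟩)
  have h1 : 0 ≤ e * (1 - τ) := mul_nonneg he0'.le (by linarith)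
  have h2 : 0 ≤ e * τ := mul_nonneg he0'.le hτ0
  refine ⟨e * (1 - τ), e * τ, h1, h2, by linarith, hτ, hP ?_⟩
  rw [Prod.dist_eq, Real.dist_eq, Real.dist_eq, max_lt_iff]
  simp only [add_sub_cancel_left, abs_of_nonneg h1, abs_of_nonneg h2]
  constructor <;> nlinarith

/-- The spherical curve `γ`, with first and second derivatives `v` and `w`, is tangent at each
time `t` to the circle of centre `o t` and height `h`, and bends strictly more than that circle:
the centre moves in the direction opposite to `v`. The notion is invariant under time reversal. -/
structure IsRolling (h : ℝ) (γ v w o : ℝ → R3) (lam : ℝ → ℝ) : Prop where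
  pos : 0 < h
  hasDeriv : ∀ s, HasDerivAt γ (v s) s
  hasDeriv_v : ∀ s, HasDerivAt v (w s) s
  continuous_w : Continuous w
  hasDeriv_o : ∀ s, HasDerivAt o (-lam s • v s) s
  lam_pos : ∀ s, 0 < lam s
  sphere : ∀ s, dot3 (γ s) (γ s) = 1
  sphere_o : ∀ s, dot3 (o s) (o s) = 1
  height : ∀ s, dot3 (γ s) (o s) = h
  tangent : ∀ s, dot3 (v s) (o s) = 0
  speed_pos : ∀ s, 0 < dot3 (v s) (v s)

namespace IsRolling

variable {h : ℝ} {γ v w o : ℝ → R3} {lam : ℝ → ℝ}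

lemma reverse (H : IsRolling h γ v w o lam) :
    IsRolling h (fun s => γ (-s)) (fun s => -v (-s)) (fun s => w (-s)) (fun s => o (-s))
      (fun s => lam (-s)) where
  pos := H.pos
  hasDeriv s := by
    have := (H.hasDeriv (-s)).scomp s (hasDerivAt_neg s)
    simpa [Function.comp_def] using this
  hasDeriv_v s := by
    have := ((H.hasDeriv_v (-s)).scomp s (hasDerivAt_neg s)).neg
    simpa [Function.comp_def, Pi.neg_def] using this
  continuous_w := H.continuous_w.comp continuous_neg
  hasDeriv_o s := by
    have := (H.hasDeriv_o (-s)).scomp s (hasDerivAt_neg s)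
    simpa [Function.comp_def] using this
  lam_pos s := H.lam_pos _
  sphere s := H.sphere _
  sphere_o s := H.sphere_o _
  height s := H.height _
  tangent s := by
    have := H.tangent (-s)
    simp only [dot3, Pi.neg_apply] at this ⊢
    linarith
  speed_pos s := by
    have := H.speed_pos (-s)
    simp only [dot3, Pi.neg_apply] at this ⊢
    linarith

lemma continuous (H : IsRolling h γ v w o lam) : Continuous γ :=
  continuous_iff_continuousAt.2 fun s => (H.hasDeriv s).continuousAt

lemma continuous_v (H : IsRolling h γ v w o lam) : Continuous v :=
  continuous_iff_continuousAt.2 fun s => (H.hasDeriv_v s).continuousAt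

lemma continuous_o (H : IsRolling h γ v w o lam) : Continuous o :=
  continuous_iff_continuousAt.2 fun s => (H.hasDeriv_o s).continuousAt

lemma dot3_v_γ (H : IsRolling h γ v w o lam) (s : ℝ) : dot3 (v s) (γ s) = 0 := by
  have h1 := hasDerivAt_dot3 (H.hasDeriv s) (H.hasDeriv s)
  simp only [H.sphere] at h1
  have h2 := h1.unique (hasDerivAt_const s 1)
  rw [dot3_comm (γ s)] at h2
  linarith

lemma dot3_w_o (H : IsRolling h γ v w o lam) (s : ℝ) :
    dot3 (w s) (o s) = lam s * dot3 (v s) (v s) := by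
  have h1 := hasDerivAt_dot3 (H.hasDeriv_v s) (H.hasDeriv_o s)
  simp only [H.tangent] at h1
  have h2 := h1.unique (hasDerivAt_const s 0)
  rw [dot3_smul_right] at h2
  linarith

lemma dot3_w_γ (H : IsRolling h γ v w o lam) (s : ℝ) :
    dot3 (w s) (γ s) = -dot3 (v s) (v s) := by
  have h1 := hasDerivAt_dot3 (H.hasDeriv_v s) (H.hasDeriv s)
  simp only [H.dot3_v_γ] at h1
  have h2 := h1.unique (hasDerivAt_const s 0)
  linarith

lemma hasDerivAt_center (H : IsRolling h γ v w o lam) (a : R3) (t : ℝ) :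
    HasDerivAt (fun t => dot3 a (o t)) (-lam t * dot3 a (v t)) t := by
  refine (hasDerivAt_dot3_right (H.hasDeriv_o t) a).congr_deriv ?_
  rw [dot3_smul_right]

lemma continuous_gap (H : IsRolling h γ v w o lam) :
    Continuous fun p : ℝ × ℝ => dot3 (γ p.2) (o p.1) :=
  (H.continuous.comp continuous_snd).dot3 (H.continuous_o.comp continuous_fst)

lemma exists_local_gap (H : IsRolling h γ v w o lam) (y : ℝ) :
    ∃ ε > 0, ∀ t ∈ Metric.ball y ε, ∀ x ∈ Metric.ball y ε, t ≠ x →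
      h < dot3 (γ x) (o t) := by
  have hc : Continuous fun p : ℝ × ℝ => dot3 (w p.2) (o p.1) :=
    (H.continuous_w.comp continuous_snd).dot3 (H.continuous_o.comp continuous_fst)
  have h0 : 0 < dot3 (w y) (o y) := by
    rw [H.dot3_w_o]; exact mul_pos (H.lam_pos y) (H.speed_pos y)
  obtain ⟨ε, hε, hball⟩ := Metric.eventually_nhds_iff_ball.1
    (hc.continuousAt.eventually (lt_mem_nhds (a := 0) (b := dot3 (w (y, y).2) (o (y, y).1)) h0))
  refine ⟨ε, hε, fun t ht x hx htx => ?_⟩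
  have hconv : StrictConvexOn ℝ (Metric.ball y ε) fun x => dot3 (γ x) (o t) := by
    have hd : ∀ x, HasDerivAt (fun x => dot3 (γ x) (o t)) (dot3 (v x) (o t)) x := fun x =>
      hasDerivAt_dot3_left (H.hasDeriv x) _
    have hd2 : ∀ x, HasDerivAt (fun x => dot3 (v x) (o t)) (dot3 (w x) (o t)) x := fun x =>
      hasDerivAt_dot3_left (H.hasDeriv_v x) _
    refine strictConvexOn_of_deriv2_pos' (convex_ball y ε)
      (fun x _ => (hd x).continuousAt.continuousWithinAt) fun x hx => ?_
    have : deriv (fun x => dot3 (γ x) (o t)) = fun x => dot3 (v x) (o t) :=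
      funext fun x => (hd x).deriv
    simp only [Function.iterate_succ, Function.iterate_zero, Function.comp_apply, id, this,
      (hd2 x).deriv]
    refine hball (t, x) ?_
    rw [Metric.mem_ball, Prod.dist_eq, max_lt_iff]
    exact ⟨ht, hx⟩
  have hd : HasDerivAt (fun x => dot3 (γ x) (o t)) 0 t :=
    (hasDerivAt_dot3_left (H.hasDeriv t) (o t)).congr_deriv (H.tangent t)
  have hmin : ∀ z ∈ Metric.ball y ε, dot3 (γ t) (o t) ≤ dot3 (γ z) (o t) := by
    intro z hz
    have hmono := hconv.convexOn
    rcases lt_trichotomy t z with hlt | rfl | hlt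
    · have := hmono.le_slope_of_hasDerivAt ht hz hlt hd
      rw [slope_def_field] at this
      have h3 := (le_div_iff₀ (sub_pos.2 hlt)).1 this
      linarith
    · exact le_rfl
    · have := hmono.slope_le_of_hasDerivAt hz ht hlt hd
      rw [slope_def_field] at this
      have h3 := (div_le_iff₀ (sub_pos.2 hlt)).1 this
      linarith
  have hmid : (1 / 2 : ℝ) • t + (1 / 2 : ℝ) • x ∈ Metric.ball y ε :=
    convex_ball y ε ht hx (by norm_num) (by norm_num) (by norm_num)
  have h1 := hconv.2 ht hx htx (show (0 : ℝ) < 1 / 2 by norm_num)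
    (show (0 : ℝ) < 1 / 2 by norm_num) (by norm_num)
  have h2 := hmin _ hmid
  rw [H.height] at h2
  simp only [H.height] at h1
  simp only [smul_eq_mul] at h1 h2
  linarith

lemma exists_uniform_gap (H : IsRolling h γ v w o lam) (p q : ℝ) :
    ∃ δ > 0, ∀ t ∈ Set.Icc p q, ∀ x, |x - t| < δ → t ≠ x → h < dot3 (γ x) (o t) := by
  choose ε hε hgap using H.exists_local_gap
  obtain ⟨δ, hδ, hcov⟩ := lebesgue_number_lemma_of_metric (isCompact_Icc (a := p) (b := q))
    (fun y => Metric.isOpen_ball (x := y) (ε := ε y))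
    (fun y _ => Set.mem_iUnion.2 ⟨y, Metric.mem_ball_self (hε y)⟩)
  refine ⟨δ, hδ, fun t ht x hx htx => ?_⟩
  obtain ⟨y, hy⟩ := hcov t ht
  exact hgap y t (hy (Metric.mem_ball_self hδ)) x (hy (by rwa [Metric.mem_ball, Real.dist_eq])) htx

/-- Along an embedded arc the tangent disks contain the future of the curve, as soon as the first
one does. -/
theorem nested (H : IsRolling h γ v w o lam) {p q : ℝ} (hinj : Set.InjOn γ (Set.Icc p q))
    (h0 : ∀ x ∈ Set.Ioc p q, h < dot3 (γ x) (o p)) :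
    ∀ t x, p ≤ t → t < x → x ≤ q → h < dot3 (γ x) (o t) := by
  by_contra! hcon
  obtain ⟨t₀, x₀, ht₀, htx₀, hx₀, hbad⟩ := hcon
  obtain ⟨δ, hδ, hgap⟩ := H.exists_uniform_gap p q
  set K : Set (ℝ × ℝ) := (Set.Icc p q ×ˢ Set.Icc p q) ∩
    {z | δ ≤ z.2 - z.1 ∧ dot3 (γ z.2) (o z.1) ≤ h} with hK
  have hfar : ∀ t x, p ≤ t → t < x → x ≤ q → dot3 (γ x) (o t) ≤ h → (t, x) ∈ K := by
    intro t x h1 h2 h3 h4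
    refine ⟨⟨⟨h1, h2.le.trans h3⟩, ⟨h1.trans h2.le, h3⟩⟩, ?_, h4⟩
    by_contra! hlt
    refine (hgap t ⟨h1, h2.le.trans h3⟩ x ?_ h2.ne).not_ge h4
    simp only at hlt
    rw [abs_of_pos (sub_pos.2 h2)]
    exact hlt
  have hKc : IsCompact K := by
    refine (isCompact_Icc.prod isCompact_Icc).inter_right (IsClosed.inter ?_ ?_)
    · exact isClosed_le continuous_const (continuous_snd.sub continuous_fst)
    · exact isClosed_le H.continuous_gap continuous_const
  obtain ⟨⟨t, y⟩, htyK, hmin⟩ := hKc.exists_isMinOn ⟨_, hfar _ _ ht₀ htx₀ hx₀ hbad⟩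
    continuous_snd.continuousOn
  obtain ⟨⟨⟨hpt, -⟩, ⟨-, hyq⟩⟩, hδty, hle⟩ := id htyK
  simp only at hpt hyq hδty hle
  have hty : t < y := by linarith
  have hnonneg : ∀ s, p ≤ s → s < y → h ≤ dot3 (γ y) (o s) := by
    intro s hps hsy
    have hc : ContinuousWithinAt (fun x => dot3 (γ x) (o s)) (Set.Ioo s y) y :=
      (H.continuous.dot3 continuous_const).continuousWithinAt
    have hcl : y ∈ closure (Set.Ioo s y) := by
      rw [closure_Ioo hsy.ne]; exact ⟨hsy.le, le_rfl⟩
    have := mem_closure_iff_nhdsWithin_neBot.1 hcl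
    refine ge_of_tendsto hc ?_
    filter_upwards [self_mem_nhdsWithin] with x hx
    by_contra! hlt
    have := hmin (hfar s x hps hx.1 (hx.2.le.trans hyq) hlt.le)
    exact absurd hx.2 (not_lt.2 this)
  have heq : dot3 (γ y) (o t) = h := le_antisymm hle (hnonneg t hpt hty)
  have hpt' : p < t := by
    refine lt_of_le_of_ne hpt ?_
    rintro rfl
    exact (h0 y ⟨hty, hyq⟩).ne' heq
  have hlocmin : IsLocalMin (fun s => dot3 (γ y) (o s)) t := by
    filter_upwards [Ioo_mem_nhds hpt' hty] with s hs
    rw [heq]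
    exact hnonneg s hs.1.le hs.2
  have hcrit := hlocmin.hasDerivAt_eq_zero (H.hasDerivAt_center (γ y) t)
  have hperp : dot3 (γ y) (v t) = 0 :=
    (mul_eq_zero.1 hcrit).resolve_left (neg_ne_zero.2 (H.lam_pos t).ne')
  have hdet : det3 (γ y) (o t) (γ t) = 0 :=
    det3_eq_zero_of_orthogonal (H.speed_pos t) (by rw [dot3_comm, hperp]) (H.tangent t)
      (H.dot3_v_γ t)
  have hopp : γ y = (2 * h) • o t - γ t := by
    refine (eq_or_eq_reflect (H.sphere_o t) (H.sphere y) (H.sphere t) heq (H.height t)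
      hdet).resolve_left fun he => ?_
    exact hty.ne' (hinj ⟨hpt.trans hty.le, hyq⟩ ⟨hpt, hty.le.trans hyq⟩ he)
  have hw : 0 < dot3 (γ y) (w t) := by
    rw [hopp, dot3_sub_left, dot3_smul_left, dot3_comm (o t), dot3_comm (γ t), H.dot3_w_o,
      H.dot3_w_γ]
    have h1 := H.speed_pos t
    have h2 := mul_pos (mul_pos H.pos (H.lam_pos t)) h1
    nlinarith
  have hpos : ∀ᶠ s in nhdsWithin t (Set.Ioi t), 0 < dot3 (γ y) (v s) := by
    have h1 := (hasDerivAt_iff_tendsto_slope.1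
      (hasDerivAt_dot3_right (H.hasDeriv_v t) (γ y))).mono_left
      (nhdsWithin_mono t (fun x (hx : t < x) => hx.ne') : nhdsWithin t (Set.Ioi t) ≤ _)
    filter_upwards [h1.eventually (lt_mem_nhds hw), self_mem_nhdsWithin] with s hs hts
    rw [slope_def_field, hperp, sub_zero] at hs
    exact (div_pos_iff_of_pos_right (sub_pos.2 hts)).1 hs
  obtain ⟨c, hc, hcpos⟩ := (mem_nhdsGT_iff_exists_Ioo_subset).1 hpos
  have hc' : t < c := hc
  have hlt : ∃ s, t < s ∧ s < c ∧ s < y :=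
    (exists_between (lt_min hc' hty)).imp fun s hs => ⟨hs.1, lt_min_iff.1 hs.2⟩
  obtain ⟨s, hts, hsc, hsy⟩ := hlt
  obtain ⟨r, hr, hslope⟩ := exists_hasDerivAt_eq_slope (fun s => dot3 (γ y) (o s)) _ hts
    (continuous_const.dot3 H.continuous_o).continuousOn
    (fun x _ => H.hasDerivAt_center (γ y) x)
  have h1 : 0 < dot3 (γ y) (v r) := hcpos ⟨hr.1, hr.2.trans hsc⟩
  have h2 : 0 ≤ -lam r * dot3 (γ y) (v r) := by
    rw [hslope]
    exact div_nonneg (by linarith [hnonneg s (hpt.trans hts.le) hsy]) (by linarith)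
  nlinarith [mul_pos (H.lam_pos r) h1]

lemma continuous_gap_swap (H : IsRolling h γ v w o lam) :
    Continuous fun z : ℝ × ℝ => dot3 (γ z.1) (o z.2) :=
  (H.continuous.comp continuous_fst).dot3 (H.continuous_o.comp continuous_snd)

lemma continuous_dot3_γ_v (H : IsRolling h γ v w o lam) :
    Continuous fun z : ℝ × ℝ => dot3 (γ z.1) (v z.2) :=
  (H.continuous.comp continuous_fst).dot3 (H.continuous_v.comp continuous_snd)

lemma continuous_dot3_v_o (H : IsRolling h γ v w o lam) :
    Continuous fun z : ℝ × ℝ => dot3 (v z.1) (o z.2) :=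
  (H.continuous_v.comp continuous_fst).dot3 (H.continuous_o.comp continuous_snd)

lemma dot3_v_o_ne_zero (H : IsRolling h γ v w o lam) {s u : ℝ} (hz : dot3 (γ s) (o u) = h)
    (hgap : h < dot3 (γ u) (o s)) : dot3 (v s) (o u) ≠ 0 := by
  intro h0
  have hdet : det3 (o u) (γ s) (o s) = 0 :=
    det3_eq_zero_of_orthogonal (H.speed_pos s) h0 (H.dot3_v_γ s) (H.tangent s)
  have hu := H.height u
  rcases eq_or_eq_reflect (H.sphere s) (H.sphere_o u) (H.sphere_o s) (by rw [dot3_comm, hz])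
    (by rw [dot3_comm, H.height]) hdet with he | he
  · rw [he] at hu
    linarith
  · rw [he, dot3_sub_right, dot3_smul_right] at hu
    nlinarith [H.pos, dot3_le_one (H.sphere u) (H.sphere s)]

/-- Whenever an earlier point of the curve lies on a tangent circle, the two first variations of
that incidence have matching signs. -/
theorem variation_pos (H : IsRolling h γ v w o lam) {p q : ℝ}
    (hgap : ∀ t x, p ≤ t → t < x → x ≤ q → h < dot3 (γ x) (o t))
    (hne : ∀ s u, p ≤ s → s < u → u ≤ q → dot3 (γ s) (o u) = h → dot3 (γ s) (v u) ≠ 0)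
    {s u : ℝ} (hs : p ≤ s) (hsu : s < u) (hu : u ≤ q) (hz : dot3 (γ s) (o u) = h) :
    0 < dot3 (γ s) (v u) * dot3 (v s) (o u) := by
  by_contra! hbad
  obtain ⟨δ, hδ, hδgap⟩ := H.exists_uniform_gap p q
  set K : Set (ℝ × ℝ) := (Set.Icc p q ×ˢ Set.Icc p q) ∩ {z | δ ≤ z.2 - z.1 ∧
    dot3 (γ z.1) (o z.2) = h ∧ dot3 (γ z.1) (v z.2) * dot3 (v z.1) (o z.2) ≤ 0} with hK
  have hmem : ∀ s u, p ≤ s → s < u → u ≤ q → dot3 (γ s) (o u) = h →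
      dot3 (γ s) (v u) * dot3 (v s) (o u) ≤ 0 → (s, u) ∈ K := by
    intro s u h1 h2 h3 h4 h5
    refine ⟨⟨⟨h1, h2.le.trans h3⟩, ⟨h1.trans h2.le, h3⟩⟩, ?_, h4, h5⟩
    by_contra! hlt
    refine (hδgap u ⟨h1.trans h2.le, h3⟩ s ?_ h2.ne').ne' h4
    rw [abs_sub_comm, abs_of_pos (sub_pos.2 h2)]
    exact hlt
  have hKc : IsCompact K := by
    refine (isCompact_Icc.prod isCompact_Icc).inter_right
      (IsClosed.inter ?_ (IsClosed.inter ?_ ?_))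
    · exact isClosed_le continuous_const (continuous_snd.sub continuous_fst)
    · exact isClosed_eq H.continuous_gap_swap continuous_const
    · exact isClosed_le (H.continuous_dot3_γ_v.mul H.continuous_dot3_v_o) continuous_const
  obtain ⟨⟨s, u⟩, hsuK, hmin⟩ := hKc.exists_isMinOn ⟨_, hmem _ _ hs hsu hu hz hbad⟩
    (continuous_snd.sub continuous_fst).continuousOn
  clear hbad hz hs hsu hu
  obtain ⟨⟨⟨hs, -⟩, ⟨-, hu⟩⟩, hδsu, hz, hbad⟩ := id hsuK
  simp only at hs hu hδsu hz hbad
  have hsu : s < u := by linarith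
  have h1 := hne s u hs hsu hu hz
  have h2 := H.dot3_v_o_ne_zero hz (hgap s u hs hsu hu)
  have hneg : dot3 (γ s) (v u) * dot3 (v s) (o u) < 0 := hbad.lt_of_ne (mul_ne_zero h1 h2)
  have hcont : Continuous fun z : ℝ × ℝ => dot3 (γ z.1) (v (-z.2)) * dot3 (v z.1) (o (-z.2)) :=
    (H.continuous_dot3_γ_v.mul H.continuous_dot3_v_o).comp
      (f := fun z : ℝ × ℝ => (z.1, -z.2)) (by fun_prop)
  have hder : HasDerivAt (fun u' => dot3 (γ s) (o (-u')) - h) (lam u * dot3 (γ s) (v u)) (-u) := by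
    have h3 := H.hasDerivAt_center (γ s) (- -u)
    have h4 := (h3.comp (-u) (hasDerivAt_neg (-u))).sub_const h
    refine h4.congr_deriv ?_
    rw [neg_neg]; ring
  obtain ⟨e₁, e₂, he₁, he₂, he, hz', hneg', hlt'⟩ := exists_zero_above
    (f := fun s u => dot3 (γ s) (o (-u)) - h) (s := s) (u := -u) (p := dot3 (v s) (o u))
    (q := lam u * dot3 (γ s) (v u))
    (P := fun z => dot3 (γ z.1) (v (-z.2)) * dot3 (v z.1) (o (-z.2)) < 0 ∧ z.1 < -z.2)
    ((H.continuous_gap_swap.comp (f := fun z : ℝ × ℝ => (z.1, -z.2)) (by fun_prop)).sub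
      continuous_const) (by simp [hz])
    (by simpa using (hasDerivAt_dot3_left (H.hasDeriv s) (o u)).sub_const h)
    hder (by nlinarith [H.lam_pos u])
    ((hcont.continuousAt.eventually (gt_mem_nhds (by simpa using hneg))).and
      ((continuous_fst.continuousAt.eventually_lt continuous_snd.neg.continuousAt
        (by simpa using hsu))))
  have := hmin (hmem (s + e₁) (-(-u + e₂)) (by linarith) hlt' (by linarith)
    (by simpa [sub_eq_zero] using hz') hneg'.le)
  simp only [Set.mem_ofPred_eq, Pi.sub_apply] at this
  linarith

/-- An incidence of the wrong sign can be transported to the end of the arc. -/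
theorem exists_incidence_at_end (H : IsRolling h γ v w o lam) {p q : ℝ}
    (hgap : ∀ t x, p ≤ t → t < x → x ≤ q → h < dot3 (γ x) (o t))
    (hne : ∀ s u, p ≤ s → s < u → u ≤ q → dot3 (γ s) (o u) = h → dot3 (γ s) (v u) ≠ 0)
    {s u : ℝ} (hs : p ≤ s) (hsu : s < u) (hu : u ≤ q) (hz : dot3 (γ s) (o u) = h)
    (hbad : dot3 (γ s) (v u) ≤ 0) :
    ∃ s₁, p ≤ s₁ ∧ s₁ < q ∧ dot3 (γ s₁) (o q) = h ∧ dot3 (γ s₁) (v q) < 0 := by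
  obtain ⟨δ, hδ, hδgap⟩ := H.exists_uniform_gap p q
  set K : Set (ℝ × ℝ) := (Set.Icc p q ×ˢ Set.Icc p q) ∩ {z | δ ≤ z.2 - z.1 ∧
    dot3 (γ z.1) (o z.2) = h ∧ dot3 (γ z.1) (v z.2) ≤ 0} with hK
  have hmem : ∀ s u, p ≤ s → s < u → u ≤ q → dot3 (γ s) (o u) = h →
      dot3 (γ s) (v u) ≤ 0 → (s, u) ∈ K := by
    intro s u h1 h2 h3 h4 h5
    refine ⟨⟨⟨h1, h2.le.trans h3⟩, ⟨h1.trans h2.le, h3⟩⟩, ?_, h4, h5⟩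
    by_contra! hlt
    refine (hδgap u ⟨h1.trans h2.le, h3⟩ s ?_ h2.ne').ne' h4
    rw [abs_sub_comm, abs_of_pos (sub_pos.2 h2)]
    exact hlt
  have hKc : IsCompact K := by
    refine (isCompact_Icc.prod isCompact_Icc).inter_right
      (IsClosed.inter ?_ (IsClosed.inter ?_ ?_))
    · exact isClosed_le continuous_const (continuous_snd.sub continuous_fst)
    · exact isClosed_eq H.continuous_gap_swap continuous_const
    · exact isClosed_le H.continuous_dot3_γ_v continuous_const
  obtain ⟨⟨s, u⟩, hsuK, hmax⟩ := hKc.exists_isMaxOn ⟨_, hmem _ _ hs hsu hu hz hbad⟩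
    (continuous_fst.add continuous_snd).continuousOn
  clear hbad hz hs hsu hu
  obtain ⟨⟨⟨hs, -⟩, ⟨-, hu⟩⟩, hδsu, hz, hbad⟩ := id hsuK
  simp only at hs hu hδsu hz hbad
  have hsu : s < u := by linarith
  have hneg : dot3 (γ s) (v u) < 0 := hbad.lt_of_ne (hne s u hs hsu hu hz)
  rcases hu.eq_or_lt with rfl | huq
  · exact ⟨s, hs, hsu, hz, hneg⟩
  have hpos := H.variation_pos hgap hne hs hsu hu hz
  obtain ⟨e₁, e₂, he₁, he₂, he, hz', hneg', hlt', hq'⟩ := exists_zero_above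
    (f := fun s u => dot3 (γ s) (o u) - h) (s := s) (u := u) (p := dot3 (v s) (o u))
    (q := -lam u * dot3 (γ s) (v u))
    (P := fun z => dot3 (γ z.1) (v z.2) < 0 ∧ z.1 < z.2 ∧ z.2 < q)
    (H.continuous_gap_swap.sub continuous_const) (by simp [hz])
    ((hasDerivAt_dot3_left (H.hasDeriv s) (o u)).sub_const h)
    ((H.hasDerivAt_center (γ s) u).sub_const h)
    (by nlinarith [H.lam_pos u, mul_pos (H.lam_pos u) hpos])
    ((H.continuous_dot3_γ_v.continuousAt.eventually (gt_mem_nhds hneg)).and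
      ((continuous_fst.continuousAt.eventually_lt continuous_snd.continuousAt hsu).and
        (continuous_snd.continuousAt.eventually (gt_mem_nhds huq))))
  have := hmax (hmem (s + e₁) (u + e₂) (by linarith) hlt' hq'.le
    (by simpa [sub_eq_zero] using hz') hneg'.le)
  simp only [Set.mem_ofPred_eq, Pi.add_apply] at this
  linarith

end IsRolling

lemma HasDerivAt.nonneg_of_neg_left {f : ℝ → ℝ} {f' m r : ℝ} (hf : HasDerivAt f f' r)
    (hmr : m < r) (h0 : f r = 0) (hneg : ∀ s ∈ Set.Ico m r, f s < 0) : 0 ≤ f' := by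
  have h1 := (hasDerivAt_iff_tendsto_slope.1 hf).mono_left
    (nhdsWithin_mono r (fun x (hx : x < r) => hx.ne) : nhdsWithin r (Set.Iio r) ≤ _)
  refine ge_of_tendsto h1 ?_
  filter_upwards [Ioo_mem_nhdsLT hmr] with s hs
  rw [slope_def_field, h0, sub_zero]
  exact div_nonneg_of_nonpos (hneg s ⟨hs.1.le, hs.2⟩).le (by linarith [hs.2])

lemma exists_first_zero {f : ℝ → ℝ} (hf : Continuous f) {m r : ℝ} (hmr : m < r) (hm : f m < 0)
    (hr : 0 < f r) : ∃ z ∈ Set.Ioo m r, f z = 0 ∧ ∀ s ∈ Set.Ico m z, f s < 0 := by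
  obtain ⟨z, ⟨⟨hmz, hzr⟩, hz⟩, hmin⟩ := (isCompact_Icc.inter_right
    (isClosed_le continuous_const hf : IsClosed {s | 0 ≤ f s})).exists_isLeast
      ⟨r, (⟨⟨hmr.le, le_rfl⟩, hr.le⟩ : r ∈ Set.Icc m r ∩ {s | 0 ≤ f s})⟩
  obtain ⟨y, ⟨hmy, hyz⟩, hy⟩ := intermediate_value_Icc hmz hf.continuousOn
    (show (0 : ℝ) ∈ Set.Icc (f m) (f z) from ⟨hm.le, hz⟩)
  have hyz' : y = z := le_antisymm hyz (hmin ⟨⟨hmy, hyz.trans hzr⟩, hy.ge⟩)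
  subst hyz'
  refine ⟨y, ⟨hmy.lt_of_ne ?_, hzr.lt_of_ne ?_⟩, hy, fun s hs => ?_⟩
  · rintro rfl; exact hm.ne hy
  · rintro rfl; exact hr.ne' hy
  · by_contra! hcon
    exact absurd (hmin ⟨⟨hs.1, hs.2.le.trans hzr⟩, hcon⟩) (not_le.2 hs.2)

lemma HasDerivAt.nonpos_of_neg_right {f : ℝ → ℝ} {f' l m : ℝ} (hf : HasDerivAt f f' l)
    (hlm : l < m) (h0 : f l = 0) (hneg : ∀ s ∈ Set.Ioc l m, f s < 0) : f' ≤ 0 := by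
  have h1 : HasDerivAt (fun s => f (-s)) (-f') (-l) := by
    have := (show HasDerivAt f f' (- -l) by rwa [neg_neg]).comp (-l) (hasDerivAt_neg (-l))
    simpa [Function.comp_def] using this
  have := h1.nonneg_of_neg_left (neg_lt_neg hlm) (by simpa using h0)
    (fun s hs => hneg _ ⟨by linarith [hs.2], by linarith [hs.1]⟩)
  linarith

lemma exists_last_zero {f : ℝ → ℝ} (hf : Continuous f) {l m : ℝ} (hlm : l < m) (hl : 0 < f l)
    (hm : f m < 0) : ∃ z ∈ Set.Ioo l m, f z = 0 ∧ ∀ s ∈ Set.Ioc z m, f s < 0 := by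
  obtain ⟨z, hz, hz0, hneg⟩ := exists_first_zero (hf.comp continuous_neg) (neg_lt_neg hlm)
    (by simpa using hm) (by simpa using hl)
  refine ⟨-z, ⟨by linarith [hz.2], by linarith [hz.1]⟩, hz0, fun s hs => ?_⟩
  simpa using hneg (-s) ⟨by linarith [hs.2], by linarith [hs.1]⟩

lemma HasDerivAt.eventually_neg_right {f : ℝ → ℝ} {f' l : ℝ} (hf : HasDerivAt f f' l)
    (h0 : f l = 0) (hf' : f' < 0) : ∀ᶠ s in nhdsWithin l (Set.Ioi l), f s < 0 := by
  have h1 := (hasDerivAt_iff_tendsto_slope.1 hf).mono_left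
    (nhdsWithin_mono l (fun x (hx : l < x) => hx.ne') : nhdsWithin l (Set.Ioi l) ≤ _)
  filter_upwards [h1.eventually (gt_mem_nhds hf'), self_mem_nhdsWithin] with s hs hls
  rw [slope_def_field, h0, sub_zero] at hs
  by_contra! hcon
  exact hs.not_ge (div_nonneg hcon (by linarith [Set.mem_Ioi.1 hls]))

lemma sq_dot3_lt_one_of_det3 {O a v : R3} (hO : dot3 O O = 1) (ha : dot3 a a = 1)
    (hdet : 0 < det3 O a v) : dot3 O a ^ 2 < 1 := by
  have hne : a - dot3 O a • O ≠ 0 := by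
    intro h0
    have h1 : a = dot3 O a • O := sub_eq_zero.1 h0
    have h2 : ∀ k : ℝ, det3 O (k • O) v = 0 := fun k => by simp [det3, dot3, cross3]; ring
    rw [h1, h2] at hdet
    exact lt_irrefl _ hdet
  have h1 := dot3_self_pos hne
  have h2 : dot3 (a - dot3 O a • O) (a - dot3 O a • O) =
      dot3 a a - 2 * dot3 O a * dot3 O a + dot3 O a ^ 2 * dot3 O O := by
    rw [dot3_sub_self, dot3_smul_left, dot3_smul_right, dot3_smul_right, dot3_comm a O]; ring
  rw [h2, hO, ha] at h1
  linarith

/-- Two points lying on a common open meridian issuing from `O`. -/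
lemma exists_eq_of_same_ray {O a b : R3} (hO : dot3 O O = 1) (ha : dot3 a a = 1)
    (hb : dot3 b b = 1) (ha1 : dot3 O a ^ 2 < 1) (hb1 : dot3 O b ^ 2 < 1)
    (hdet : det3 O a b = 0) (hdot : 0 ≤ dot3 a b - dot3 O a * dot3 O b) :
    0 < dot3 a b - dot3 O a * dot3 O b ∧ ∃ r : ℝ, 0 < r ∧
      b = (dot3 O b - r * dot3 O a) • O + r • a ∧
        r ^ 2 * (1 - dot3 O a ^ 2) = 1 - dot3 O b ^ 2 := by
  have h1 := det3_sq O a b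
  rw [hdet, hO, ha, hb] at h1
  set A := dot3 a b - dot3 O a * dot3 O b with hA
  have h2 : A ^ 2 = (1 - dot3 O a ^ 2) * (1 - dot3 O b ^ 2) := by
    rw [hA]; linear_combination h1
  have hPa : 0 < 1 - dot3 O a ^ 2 := by linarith
  have hPb : 0 < 1 - dot3 O b ^ 2 := by linarith
  have hApos : 0 < A := by
    refine hdot.lt_of_ne fun h0 => ?_
    rw [← h0] at h2
    nlinarith [mul_pos hPa hPb]
  refine ⟨hApos, A / (1 - dot3 O a ^ 2), div_pos hApos hPa, ?_, ?_⟩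
  · set r := A / (1 - dot3 O a ^ 2) with hr
    have hr1 : r * (1 - dot3 O a ^ 2) = A := div_mul_cancel₀ _ hPa.ne'
    refine sub_eq_zero.1 (eq_zero_of_dot3_self ?_)
    have h3 : dot3 (b - ((dot3 O b - r * dot3 O a) • O + r • a))
        (b - ((dot3 O b - r * dot3 O a) • O + r • a)) =
        dot3 b b + (dot3 O b - r * dot3 O a) ^ 2 * dot3 O O + r ^ 2 * dot3 a a
          - 2 * (dot3 O b - r * dot3 O a) * dot3 O b - 2 * r * dot3 a b
          + 2 * (dot3 O b - r * dot3 O a) * r * dot3 O a := by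
      simp [dot3]; ring
    rw [h3, hb, hO, ha]
    have h4 : (1 - dot3 O a ^ 2) * (1 - dot3 O b ^ 2 + r ^ 2 * (1 - dot3 O a ^ 2) - 2 * r * A)
        = 0 := by
      linear_combination -h2 + (r * (1 - dot3 O a ^ 2) - A) * hr1
    have h5 := (mul_eq_zero.1 h4).resolve_left hPa.ne'
    rw [hA] at h5
    linear_combination h5
  · have : 1 - dot3 O a ^ 2 ≠ 0 := hPa.ne'
    field_simp
    linear_combination h2

/-- On a meridian through `O`, a point that is closer to `O` than `a` is a superconvex combination
of `O` and `a`. -/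
lemma coeff_of_same_ray {x y r : ℝ} (hx : x ^ 2 < 1) (hy : y ^ 2 < 1) (hr : 0 < r)
    (hxy : x < y) (h : r ^ 2 * (1 - x ^ 2) = 1 - y ^ 2) : 0 < y - r * x ∧ 1 < y - r * x + r := by
  have hx1 : 0 < 1 - x := by nlinarith
  have hx2 : 0 < 1 + x := by nlinarith
  have hy1 : 0 < 1 - y := by nlinarith
  have hy2 : 0 < 1 + y := by nlinarith
  have h1 : 1 - y < r * (1 - x) := by
    by_contra! hcon
    have : (r * (1 - x)) ^ 2 ≤ (1 - y) ^ 2 := pow_le_pow_left₀ (by positivity) hcon 2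
    have h2 : (1 + y) * (1 - x) ≤ (1 - y) * (1 + x) := by
      have h3 : (1 - y) * ((1 + y) * (1 - x)) ≤ (1 - y) * ((1 - y) * (1 + x)) := by
        nlinarith [mul_le_mul_of_nonneg_right this hx2.le]
      exact le_of_mul_le_mul_left h3 hy1
    nlinarith
  have h2 : r * (1 + x) < 1 + y := by
    by_contra! hcon
    have : (1 + y) ^ 2 ≤ (r * (1 + x)) ^ 2 := pow_le_pow_left₀ (by positivity) hcon 2
    have h2 : (1 + y) * (1 - x) ≤ (1 - y) * (1 + x) := by
      have h3 : (1 + y) * ((1 + y) * (1 - x)) ≤ (1 + y) * ((1 - y) * (1 + x)) := by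
        nlinarith [mul_le_mul_of_nonneg_right this hx1.le]
      exact le_of_mul_le_mul_left h3 hy2
    nlinarith
  constructor <;> linarith

lemma hasDerivAt_det3_mid {f : ℝ → R3} {f' : R3} {s : ℝ} (hf : HasDerivAt f f' s) (a b : R3) :
    HasDerivAt (fun s => det3 a (f s) b) (det3 a f' b) s := by
  have h : ∀ x, det3 a x b = dot3 x (cross3 b a) := fun x => by
    simp [det3, dot3, cross3]; ring
  simp only [h]
  exact hasDerivAt_dot3_left hf _

lemma hasDerivAt_det3_right {f : ℝ → R3} {f' : R3} {s : ℝ} (hf : HasDerivAt f f' s) (a b : R3) :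
    HasDerivAt (fun s => det3 a b (f s)) (det3 a b f') s := by
  have h : ∀ x, det3 a b x = dot3 x (cross3 a b) := fun x => by
    simp [det3, dot3, cross3]; ring
  simp only [h]
  exact hasDerivAt_dot3_left hf _

/-- Two disjoint arcs turning positively about `O`, the first of which ends at `O` while the second
one ends on the boundary of a disk containing `O` and the first arc: the second arc is never
closer to `O` than the first one along the same meridian. -/
theorem not_closer_on_meridian {γ v : ℝ → R3} (hd : ∀ s, HasDerivAt γ (v s) s)
    (hsph : ∀ s, dot3 (γ s) (γ s) = 1) {O o : R3} {h s₀ b x₀ c : ℝ} (hh : 0 < h)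
    (hO : dot3 O O = 1) (hb : γ b = O)
    (hdetS : ∀ s ∈ Set.Ico s₀ b, 0 < det3 O (γ s) (v s))
    (hdetX : ∀ x ∈ Set.Icc x₀ c, 0 < det3 O (γ x) (v x))
    (hinj : ∀ s ∈ Set.Ico s₀ b, ∀ x ∈ Set.Icc x₀ c, γ s ≠ γ x)
    (hoO : h < dot3 O o) (hoS : ∀ s ∈ Set.Ico s₀ b, h ≤ dot3 (γ s) o)
    (hoc : dot3 (γ c) o = h) {s x : ℝ} (hs : s ∈ Set.Icc s₀ b) (hx : x ∈ Set.Icc x₀ c)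
    (hdet : det3 O (γ s) (γ x) = 0)
    (hdot : 0 ≤ dot3 (γ s) (γ x) - dot3 O (γ s) * dot3 O (γ x)) :
    dot3 O (γ x) < dot3 O (γ s) := by
  by_contra! hle
  have hγ : Continuous γ := continuous_iff_continuousAt.2 fun s => (hd s).continuousAt
  have hγ1 : Continuous fun z : ℝ × ℝ => γ z.1 := hγ.comp continuous_fst
  have hγ2 : Continuous fun z : ℝ × ℝ => γ z.2 := hγ.comp continuous_snd
  have hc1 : Continuous fun z : ℝ × ℝ => det3 O (γ z.1) (γ z.2) :=
    continuous_const.dot3 (hγ1.cross3 hγ2)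
  have hH1 : Continuous fun z : ℝ × ℝ => dot3 O (γ z.1) := continuous_const.dot3 hγ1
  have hH2 : Continuous fun z : ℝ × ℝ => dot3 O (γ z.2) := continuous_const.dot3 hγ2
  have hc2 : Continuous fun z : ℝ × ℝ =>
      dot3 (γ z.1) (γ z.2) - dot3 O (γ z.1) * dot3 O (γ z.2) :=
    (hγ1.dot3 hγ2).sub (hH1.mul hH2)
  set M : Set (ℝ × ℝ) := (Set.Icc s₀ b ×ˢ Set.Icc x₀ c) ∩ {z | det3 O (γ z.1) (γ z.2) = 0 ∧
    0 ≤ dot3 (γ z.1) (γ z.2) - dot3 O (γ z.1) * dot3 O (γ z.2) ∧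
    dot3 O (γ z.1) ≤ dot3 O (γ z.2)} with hM
  have hMc : IsCompact M := (isCompact_Icc.prod isCompact_Icc).inter_right
    ((isClosed_eq hc1 continuous_const).inter
      ((isClosed_le continuous_const hc2).inter (isClosed_le hH1 hH2)))
  obtain ⟨⟨s, x⟩, hsxM, hmax⟩ := hMc.exists_isMaxOn
    ⟨(s, x), (⟨⟨hs, hx⟩, hdet, hdot, hle⟩ : (s, x) ∈ M)⟩
    (continuous_fst.add continuous_snd).continuousOn
  clear hs hx hdet hdot hle
  obtain ⟨⟨hs, hx⟩, hdet, hdot, hle⟩ := id hsxM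
  simp only at hs hx hdet hdot hle
  have hx1 := sq_dot3_lt_one_of_det3 hO (hsph x) (hdetX x hx)
  have hsb : s < b := by
    refine hs.2.lt_of_ne ?_
    rintro rfl
    rw [hb, hO] at hle
    nlinarith
  have hs' : s ∈ Set.Ico s₀ b := ⟨hs.1, hsb⟩
  have hs1 := sq_dot3_lt_one_of_det3 hO (hsph s) (hdetS s hs')
  obtain ⟨hdot', r, hr, hxeq, hr2⟩ := exists_eq_of_same_ray hO (hsph s) (hsph x) hs1 hx1 hdet hdot
  have hlt : dot3 O (γ s) < dot3 O (γ x) := by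
    refine hle.lt_of_ne fun he => hinj s hs' x hx ?_
    rw [he] at hr2
    have hr1 : r = 1 := by
      have h1 : (r - 1) * ((r + 1) * (1 - dot3 O (γ x) ^ 2)) = 0 := by linear_combination hr2
      have h2 : 0 < (r + 1) * (1 - dot3 O (γ x) ^ 2) := mul_pos (by linarith) (by linarith)
      linarith [(mul_eq_zero.1 h1).resolve_right h2.ne']
    rw [hxeq, hr1, he]
    simp
  have hxc : x < c := by
    refine hx.2.lt_of_ne ?_
    rintro rfl
    obtain ⟨h1, h2⟩ := coeff_of_same_ray hs1 hx1 hr hlt hr2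
    have h3 : dot3 (γ x) o =
        (dot3 O (γ x) - r * dot3 O (γ s)) * dot3 O o + r * dot3 (γ s) o := by
      conv_lhs => rw [hxeq]
      rw [dot3_add_left, dot3_smul_left, dot3_smul_left]
    have h4 := mul_lt_mul_of_pos_left hoO h1
    have h5 := mul_le_mul_of_nonneg_left (hoS s hs') hr.le
    nlinarith
  have hp : det3 O (v s) (γ x) = -(r * det3 O (γ s) (v s)) := by
    rw [hxeq]
    simp [det3, dot3, cross3]; ring
  have hq : r * det3 O (γ s) (v x) = det3 O (γ x) (v x) := by
    conv_rhs => rw [hxeq]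
    generalize dot3 O (γ x) - r * dot3 O (γ s) = k
    simp [det3, dot3, cross3]; ring
  have hp' : det3 O (v s) (γ x) < 0 := by
    rw [hp]; exact neg_neg_of_pos (mul_pos hr (hdetS s hs'))
  have hq' : 0 < det3 O (γ s) (v x) :=
    pos_of_mul_pos_right (hq ▸ hdetX x hx) hr.le
  obtain ⟨e₁, e₂, he₁, he₂, he, hz, hd', hH', hb', hc'⟩ := exists_zero_above
    (f := fun s x => det3 O (γ s) (γ x)) hc1 hdet (hasDerivAt_det3_mid (hd s) O (γ x))
    (hasDerivAt_det3_right (hd x) O (γ s)) (mul_neg_of_neg_of_pos hp' hq')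
    (P := fun z => 0 < dot3 (γ z.1) (γ z.2) - dot3 O (γ z.1) * dot3 O (γ z.2) ∧
      dot3 O (γ z.1) < dot3 O (γ z.2) ∧ z.1 < b ∧ z.2 < c)
    ((hc2.continuousAt.eventually (lt_mem_nhds hdot')).and
      ((hH1.continuousAt.eventually_lt hH2.continuousAt hlt).and
        ((continuous_fst.continuousAt.eventually (gt_mem_nhds hsb)).and
          (continuous_snd.continuousAt.eventually (gt_mem_nhds hxc)))))
  have := hmax (show (s + e₁, x + e₂) ∈ M from ⟨⟨⟨by linarith [hs.1], hb'.le⟩,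
    ⟨by linarith [hx.1], hc'.le⟩⟩, hz, hd'.le, hH'.le⟩)
  simp only [Set.mem_ofPred_eq, Pi.add_apply] at this
  linarith

lemma dot3_mul_det3_frame {O e : R3} (he : dot3 O e = 0) (a b : R3) :
    dot3 e e * det3 O a b =
      dot3 a e * dot3 b (cross3 O e) - dot3 a (cross3 O e) * dot3 b e := by
  have h1 : dot3 a e * dot3 b (cross3 O e) - dot3 a (cross3 O e) * dot3 b e =
      dot3 e e * det3 O a b - dot3 O e * det3 e a b := by
    simp [det3, dot3, cross3]; ring
  rw [h1, he]; ring

lemma det3_mul_det3 (a b c d : R3) : det3 a b c * det3 a d c =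
    dot3 a a * (dot3 b d * dot3 c c - dot3 b c * dot3 d c)
      - dot3 a d * (dot3 a b * dot3 c c - dot3 b c * dot3 a c)
      + dot3 a c * (dot3 a b * dot3 d c - dot3 b d * dot3 a c) := by
  simp [det3, dot3, cross3]; ring

/-- An arc turning positively about its end point `O` stays on one side of a great circle through
`O` if it does so at both ends and another branch of the curve separates it from the
complementary side. -/
theorem side_pos {γ v : ℝ → R3} (hd : ∀ s, HasDerivAt γ (v s) s)
    (hsph : ∀ s, dot3 (γ s) (γ s) = 1) {O e o : R3} {h s₁ b a c : ℝ} (hh : 0 < h)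
    (hO : dot3 O O = 1) (he : dot3 O e = 0) (he0 : 0 < dot3 e e) (hac : a < c)
    (ha : γ a = O) (hb : γ b = O) (hva : dot3 (v a) (cross3 O e) < 0)
    (hdetS : ∀ s ∈ Set.Ico s₁ b, 0 < det3 O (γ s) (v s))
    (hdetX : ∀ x ∈ Set.Ioc a c, 0 < det3 O (γ x) (v x))
    (hinj : ∀ s ∈ Set.Ico s₁ b, ∀ x ∈ Set.Ioc a c, γ s ≠ γ x)
    (hoO : h < dot3 O o) (hoS : ∀ s ∈ Set.Ico s₁ b, h ≤ dot3 (γ s) o)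
    (hoc : dot3 (γ c) o = h) (hstart : 0 < dot3 (γ s₁) (cross3 O e))
    (hend : ∀ m < b, ∃ r, m < r ∧ r < b ∧ 0 < dot3 (γ r) (cross3 O e)) :
    ∀ s ∈ Set.Ico s₁ b, 0 < dot3 (γ s) (cross3 O e) := by
  have hγ : Continuous γ := continuous_iff_continuousAt.2 fun s => (hd s).continuousAt
  set f : ℝ → ℝ := fun s => dot3 (γ s) (cross3 O e) with hf
  have hfd : ∀ s, HasDerivAt f (dot3 (v s) (cross3 O e)) s := fun s =>
    hasDerivAt_dot3_left (hd s) _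
  have hfc : Continuous f := hγ.dot3 continuous_const
  have hnonneg : ∀ s ∈ Set.Ico s₁ b, 0 ≤ f s := by
    intro m hm
    by_contra! hneg
    have hs1m : s₁ < m := hm.1.lt_of_ne (by rintro rfl; exact hneg.not_gt hstart)
    obtain ⟨r, hmr, hrb, hr⟩ := hend m hm.2
    obtain ⟨s₃, hs₃, hz₃, hneg₃⟩ := exists_last_zero hfc hs1m hstart hneg
    obtain ⟨s₄, hs₄, hz₄, hneg₄⟩ := exists_first_zero hfc hmr hneg hr
    have h34 : s₃ < s₄ := hs₃.2.trans hs₄.1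
    have hs₄b : s₄ < b := hs₄.2.trans hrb
    have hsub : ∀ s ∈ Set.Icc s₃ s₄, s ∈ Set.Ico s₁ b := fun s hs =>
      ⟨hs₃.1.le.trans hs.1, hs.2.trans_lt hs₄b⟩
    have hfle : ∀ s ∈ Set.Icc s₃ s₄, f s ≤ 0 := by
      intro s hs
      rcases hs.1.eq_or_lt with rfl | h1
      · exact hz₃.le
      rcases hs.2.eq_or_lt with rfl | h2
      · exact hz₄.le
      rcases le_total s m with h3 | h3
      · exact (hneg₃ s ⟨h1, h3⟩).le
      · exact (hneg₄ s ⟨h3, h2⟩).le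
    have hE₃ : dot3 (γ s₃) e < 0 := by
      have h1 := mul_pos he0 (hdetS s₃ (hsub _ ⟨le_rfl, h34.le⟩))
      have h2 : dot3 (γ s₃) (cross3 O e) = 0 := hz₃
      rw [dot3_mul_det3_frame he, h2] at h1
      nlinarith [(hfd s₃).nonpos_of_neg_right hs₃.2 hz₃ hneg₃]
    have hE₄ : 0 < dot3 (γ s₄) e := by
      have h1 := mul_pos he0 (hdetS s₄ (hsub _ ⟨h34.le, le_rfl⟩))
      have h2 : dot3 (γ s₄) (cross3 O e) = 0 := hz₄
      rw [dot3_mul_det3_frame he, h2] at h1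
      nlinarith [(hfd s₄).nonneg_of_neg_left hs₄.1 hz₄ hneg₄]
    obtain ⟨y, hy, hymax⟩ := (isCompact_Icc (a := s₃) (b := s₄)).exists_isMaxOn
      ⟨s₃, le_rfl, h34.le⟩ (f := fun s => dot3 O (γ s)) (continuous_const.dot3 hγ).continuousOn
    have hylt : dot3 O (γ y) < dot3 O (γ a) := by
      have := sq_dot3_lt_one_of_det3 hO (hsph y) (hdetS y (hsub y hy))
      rw [ha, hO]
      nlinarith
    have hO_e : dot3 O (cross3 O e) = 0 := by simp [dot3, cross3]; ring
    have hev : ∀ᶠ x in nhdsWithin a (Set.Ioi a), f x < 0 ∧ dot3 O (γ y) < dot3 O (γ x) ∧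
        a < x ∧ x < c := by
      refine ((hfd a).eventually_neg_right (by simp only [hf, ha, hO_e]) hva).and (.and ?_ ?_)
      · exact nhdsWithin_le_nhds ((continuous_const.dot3 hγ).continuousAt.eventually
          (lt_mem_nhds hylt))
      · exact Ioo_mem_nhdsGT hac
    obtain ⟨x₀, hfx₀, hyx₀, hax₀, hx₀c⟩ := hev.exists
    have hdc : Continuous fun s => dot3 e e * det3 O (γ x₀) (γ s) :=
      continuous_const.mul (continuous_const.dot3 (continuous_const.cross3 hγ))
    have hfx₀' : dot3 (γ x₀) (cross3 O e) < 0 := hfx₀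
    obtain ⟨s, hs, hsz⟩ := intermediate_value_Icc h34.le hdc.continuousOn
      (show (0 : ℝ) ∈ Set.Icc _ _ from by
        have h3 : dot3 (γ s₃) (cross3 O e) = 0 := hz₃
        have h4 : dot3 (γ s₄) (cross3 O e) = 0 := hz₄
        simp only [dot3_mul_det3_frame he, h3, h4]
        constructor <;> nlinarith)
    have hdet : det3 O (γ x₀) (γ s) = 0 := (mul_eq_zero.1 hsz).resolve_left he0.ne'
    have hdet' : det3 O (γ s) (γ x₀) = 0 := by
      have : det3 O (γ s) (γ x₀) = -det3 O (γ x₀) (γ s) := by simp [det3, dot3, cross3]; ring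
      rw [this, hdet, neg_zero]
    have hdot : 0 ≤ dot3 (γ s) (γ x₀) - dot3 O (γ s) * dot3 O (γ x₀) := by
      have h1 : dot3 (γ x₀) (cross3 O e) ^ 2 * (dot3 (γ s) (γ x₀) - dot3 O (γ s) * dot3 O (γ x₀))
          = f s * f x₀ * (1 - dot3 O (γ x₀) ^ 2) := by
        have h2 := det3_mul_det3 O (γ s) (γ x₀) (cross3 O e)
        rw [hdet', hO, hO_e, hsph, dot3_comm (cross3 O e) (γ x₀)] at h2
        simp only [hf]
        linear_combination dot3 (γ x₀) (cross3 O e) * h2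
      have h2 := sq_dot3_lt_one_of_det3 hO (hsph x₀) (hdetX x₀ ⟨hax₀, hx₀c.le⟩)
      have h3 := mul_nonneg (mul_nonneg_of_nonpos_of_nonpos (hfle s hs) hfx₀.le)
        (by linarith : 0 ≤ 1 - dot3 O (γ x₀) ^ 2)
      rw [← h1] at h3
      exact nonneg_of_mul_nonneg_right h3 (sq_pos_of_neg hfx₀')
    have := not_closer_on_meridian hd hsph (x₀ := x₀) (c := c) hh hO hb
      (fun s hs => hdetS s ⟨hs₃.1.le.trans hs.1, hs.2⟩)
      (fun x hx => hdetX x ⟨hax₀.trans_le hx.1, hx.2⟩)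
      (fun s hs x hx => hinj s ⟨hs₃.1.le.trans hs.1, hs.2⟩ x ⟨hax₀.trans_le hx.1, hx.2⟩)
      hoO (fun s hs => hoS s ⟨hs₃.1.le.trans hs.1, hs.2⟩) hoc
      (⟨hs.1, hs.2.trans hs₄b.le⟩ : s ∈ Set.Icc s₃ b) ⟨le_rfl, hx₀c.le⟩ hdet' hdot
    exact absurd (this.trans_le (hymax hs)) (not_lt.2 hyx₀.le)
  intro s hs
  refine (hnonneg s hs).lt_of_ne fun h0 => ?_
  have hs1 : s₁ < s := hs.1.lt_of_ne (by rintro rfl; exact hstart.ne h0)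
  have hmin : IsLocalMin f s := by
    filter_upwards [Ioo_mem_nhds hs1 hs.2] with x hx
    rw [← h0]
    exact hnonneg x ⟨hx.1.le, hx.2⟩
  have h1 := hmin.hasDerivAt_eq_zero (hfd s)
  have h2 := mul_pos he0 (hdetS s hs)
  have h3 : dot3 (γ s) (cross3 O e) = 0 := h0.symm
  rw [dot3_mul_det3_frame he, h1, h3] at h2
  simp at h2

namespace IsRolling

variable {h : ℝ} {γ v w o : ℝ → R3} {lam : ℝ → ℝ}

/-- If an earlier point of an arc lies on a tangent circle of a later point, then it lies on its
positive half, provided the curve returns to the end point of the arc so as to form a negative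
shell. -/
theorem incidence_pos (H : IsRolling h γ v w o lam) {k : ℝ → ℝ} {a b c d : ℝ} (hac : a < c)
    (hcd : c < d) (hdb : d < b) (hk : ∀ s, 0 < k s)
    (ho : ∀ s, o s = h • γ s + k s • cross3 (γ s) (v s)) (hinj : Set.InjOn γ (Set.Ico a b))
    (hab : γ a = γ b) (hneg : 0 < det3 (γ a) (v a) (v b)) (hocd : o c = o d)
    (hd : ∀ x ∈ Set.Ioc d b, h < dot3 (γ x) (o d))
    (hc : ∀ x ∈ Set.Ico a c, h < dot3 (γ x) (o d)) :
    (∀ t x, d ≤ t → t < x → x ≤ b → h < dot3 (γ x) (o t)) ∧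
    ∀ s u, d ≤ s → s < u → u ≤ b → dot3 (γ s) (o u) = h → 0 < dot3 (γ s) (v u) := by
  have hne_end : ∀ s ∈ Set.Ico d b, γ s ≠ γ b := fun s hs he => by
    have := hinj ⟨by linarith [hs.1], hs.2⟩ ⟨le_rfl, by linarith⟩ (he.trans hab.symm)
    linarith [hs.1]
  have hinj_d : Set.InjOn γ (Set.Icc d b) := by
    intro x hx y hy hxy
    rcases hx.2.eq_or_lt with rfl | hxb <;> rcases hy.2.eq_or_lt with rfl | hyb
    · rfl
    · exact absurd hxy.symm (hne_end y ⟨hy.1, hyb⟩)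
    · exact absurd hxy (hne_end x ⟨hx.1, hxb⟩)
    · exact hinj ⟨by linarith [hx.1], hxb⟩ ⟨by linarith [hy.1], hyb⟩ hxy
  have hgap := H.nested hinj_d hd
  refine ⟨hgap, ?_⟩
  have hgap_c : ∀ x ∈ Set.Ioc a c, h < dot3 (γ a) (o x) := by
    intro x hx
    have := H.reverse.nested (p := -c) (q := -a)
      (fun x hx y hy hxy => neg_injective (hinj ⟨by linarith [hx.2], by linarith [hx.1]⟩
        ⟨by linarith [hy.2], by linarith [hy.1]⟩ hxy))
      (fun x hx => by
        simp only [neg_neg, hocd]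
        exact hc _ ⟨by linarith [hx.2], by linarith [hx.1]⟩)
      (-x) (-a) (by linarith [hx.2]) (by linarith [hx.1]) le_rfl
    simpa using this
  have hle_d : ∀ s ∈ Set.Icc d b, h ≤ dot3 (γ s) (o d) := by
    intro s hs
    rcases hs.1.eq_or_lt with rfl | hlt
    · exact (H.height _).ge
    · exact (hd s ⟨hlt, hs.2⟩).le
  have hne : ∀ s u, d ≤ s → s < u → u ≤ b → dot3 (γ s) (o u) = h → dot3 (γ s) (v u) ≠ 0 := by
    intro s u hs hsu hu hz h0
    have hdet : det3 (γ s) (o u) (γ u) = 0 := det3_eq_zero_of_orthogonal (H.speed_pos u)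
      (by rw [dot3_comm, h0]) (H.tangent u) (H.dot3_v_γ u)
    rcases eq_or_eq_reflect (H.sphere_o u) (H.sphere s) (H.sphere u) hz (H.height u) hdet
      with he | he
    · exact hsu.ne (hinj_d ⟨hs, by linarith⟩ ⟨by linarith, hu⟩ he)
    · have h1 := hle_d s ⟨hs, by linarith⟩
      rw [he, dot3_sub_left, dot3_smul_left] at h1
      nlinarith [hd u ⟨by linarith, hu⟩, H.pos, dot3_le_one (H.sphere_o u) (H.sphere_o d)]
  have hcenter : ∀ y s, dot3 y (o s) = h * dot3 y (γ s) + k s * det3 y (γ s) (v s) := by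
    intro y s
    rw [ho s, dot3_add_right, dot3_smul_right, dot3_smul_right]; rfl
  have hdet_of_gap : ∀ y s, dot3 y y = 1 → h < dot3 y (o s) → 0 < det3 y (γ s) (v s) := by
    intro y s hy hlt
    rw [hcenter] at hlt
    have h1 := mul_le_of_le_one_right H.pos.le (dot3_le_one hy (H.sphere s))
    exact pos_of_mul_pos_right (by linarith : 0 < k s * det3 y (γ s) (v s)) (hk s).le
  have hdetS : ∀ s ∈ Set.Ico d b, 0 < det3 (γ b) (γ s) (v s) := fun s hs =>
    hdet_of_gap _ _ (H.sphere b) (hgap s b hs.1 hs.2 le_rfl)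
  have hdetX : ∀ x ∈ Set.Ioc a c, 0 < det3 (γ b) (γ x) (v x) := fun x hx =>
    hdet_of_gap _ _ (H.sphere b) (hab ▸ hgap_c x hx)
  have hside : ∀ s ∈ Set.Ico d b, h ≤ dot3 (γ s) (o b) → 0 < dot3 (γ s) (cross3 (γ b) (v b)) := by
    intro s hs hle
    rw [hcenter] at hle
    have h1 := mul_lt_of_lt_one_right H.pos
      (dot3_lt_one (H.sphere s) (H.sphere b) (hne_end s hs))
    exact pos_of_mul_pos_right (by linarith : 0 < k b * det3 (γ s) (γ b) (v b)) (hk b).le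
  intro s u hs hsu hu hz
  by_contra! hbad
  obtain ⟨s₁, hds₁, hs₁b, hz₁, hψ₁⟩ := H.exists_incidence_at_end hgap hne hs hsu hu hz hbad
  have hχ₁ : dot3 (v s₁) (o b) < 0 := by
    have := H.variation_pos hgap hne hds₁ hs₁b le_rfl hz₁
    nlinarith
  obtain ⟨ε, hε, hloc⟩ := H.exists_local_gap b
  have hnear : ∀ m < b, ∃ r, m < r ∧ r < b ∧ d ≤ r ∧ h < dot3 (γ r) (o b) := by
    intro m hm
    obtain ⟨r, hr, hrb⟩ := exists_between (max_lt hm (max_lt hdb (sub_lt_self b hε)))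
    obtain ⟨h1, h2, h3⟩ := And.imp_right max_lt_iff.1 (max_lt_iff.1 hr)
    refine ⟨r, h1, hrb, h2.le, hloc b (Metric.mem_ball_self hε) r ?_ hrb.ne'⟩
    rw [Metric.mem_ball, Real.dist_eq, abs_lt]
    constructor <;> linarith
  have hf : ∀ s ∈ Set.Ico s₁ b, 0 < dot3 (γ s) (cross3 (γ b) (v b)) := by
    refine side_pos H.hasDeriv H.sphere H.pos (H.sphere b)
      (by rw [dot3_comm, H.dot3_v_γ]) (H.speed_pos b) hac hab rfl ?_
      (fun s hs => hdetS s ⟨hds₁.trans hs.1, hs.2⟩) hdetX ?_ (hd b ⟨hdb, le_rfl⟩)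
      (fun s hs => hle_d s ⟨hds₁.trans hs.1, hs.2.le⟩) (by rw [← hocd, H.height])
      (hside s₁ ⟨hds₁, hs₁b⟩ hz₁.ge) ?_
    · rw [← hab]
      have : det3 (γ a) (v a) (v b) = -dot3 (v a) (cross3 (γ a) (v b)) := by
        simp [det3, dot3, cross3]; ring
      linarith
    · intro s hs x hx he
      have := hinj ⟨by linarith [hs.1], hs.2⟩ ⟨hx.1.le, by linarith [hx.2]⟩ he
      linarith [hs.1, hx.2]
    · intro m hm
      obtain ⟨r, hmr, hrb, hdr, hr⟩ := hnear m hm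
      exact ⟨r, hmr, hrb, hside r ⟨hdr, hrb⟩ hr.le⟩
  have hgd : ∀ s, HasDerivAt (fun s => dot3 (γ s) (o b) - h) (dot3 (v s) (o b)) s := fun s =>
    (hasDerivAt_dot3_left (H.hasDeriv s) _).sub_const h
  obtain ⟨m, hm, hs₁m, hmb⟩ := (((hgd s₁).eventually_neg_right (by linarith) hχ₁).and
    (Ioo_mem_nhdsGT hs₁b)).exists
  obtain ⟨r, hmr, hrb, -, hr⟩ := hnear m hmb
  obtain ⟨z, ⟨hmz, hzr⟩, hz0, hzneg⟩ := exists_first_zero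
    ((H.continuous.dot3 continuous_const).sub continuous_const) hmr hm
    (by linarith : 0 < dot3 (γ r) (o b) - h)
  have hzb : z < b := hzr.trans hrb
  have hs₁z : s₁ < z := hs₁m.trans hmz
  have hψz : 0 < dot3 (γ z) (v b) := by
    have h1 := (hgd z).nonneg_of_neg_left hmz hz0 hzneg
    have h2 := H.variation_pos hgap hne (hds₁.trans hs₁z.le) hzb le_rfl (sub_eq_zero.1 hz0)
    exact pos_of_mul_pos_left h2 h1
  obtain ⟨ξ, hξ, hslope⟩ := exists_hasDerivAt_eq_slope
    (fun s => dot3 (γ s) (v b) / dot3 (γ s) (cross3 (γ b) (v b)))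
    (fun s => (dot3 (v s) (v b) * dot3 (γ s) (cross3 (γ b) (v b)) -
      dot3 (γ s) (v b) * dot3 (v s) (cross3 (γ b) (v b))) /
        dot3 (γ s) (cross3 (γ b) (v b)) ^ 2) hs₁z
    ((H.continuous.dot3 continuous_const).continuousOn.div
      (H.continuous.dot3 continuous_const).continuousOn
      fun s hs => (hf s ⟨hs.1, hs.2.trans_lt hzb⟩).ne')
    (fun s hs => (hasDerivAt_dot3_left (H.hasDeriv s) _).div
      (hasDerivAt_dot3_left (H.hasDeriv s) _) (hf s ⟨hs.1.le, hs.2.trans hzb⟩).ne')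
  have hfξ := hf ξ ⟨hξ.1.le, hξ.2.trans hzb⟩
  have h1 : dot3 (v ξ) (v b) * dot3 (γ ξ) (cross3 (γ b) (v b)) -
      dot3 (γ ξ) (v b) * dot3 (v ξ) (cross3 (γ b) (v b)) < 0 := by
    have h2 := dot3_mul_det3_frame (O := γ b) (e := v b) (by rw [dot3_comm, H.dot3_v_γ])
      (γ ξ) (v ξ)
    have h3 := mul_pos (H.speed_pos b) (hdetS ξ ⟨hds₁.trans hξ.1.le, hξ.2.trans hzb⟩)
    linarith
  have h4 := div_neg_of_neg_of_pos h1 (pow_pos hfξ 2)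
  rw [hslope] at h4
  have h5 := div_neg_of_neg_of_pos hψ₁ (hf s₁ ⟨le_rfl, hs₁b⟩)
  have h6 := div_pos hψz (hf z ⟨hs₁z.le, hzb⟩)
  have h7 : 0 < z - s₁ := by linarith
  exact h4.not_gt (div_pos (by linarith) h7)

end IsRolling

lemma norm3_pos {a : R3} (h : a ≠ 0) : 0 < norm3 a := Real.sqrt_pos.2 (dot3_self_pos h)

lemma norm3_sq (a : R3) : norm3 a ^ 2 = dot3 a a := Real.sq_sqrt (dot3_self_nonneg a)

lemma tangentCenter_eq (μ : ℝ) (γ : ℝ → R3) (s : ℝ) :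
    tangentCenter μ γ s = (μ / Real.sqrt (1 + μ ^ 2)) • γ s +
      ((Real.sqrt (1 + μ ^ 2))⁻¹ * (norm3 (deriv γ s))⁻¹) • cross3 (γ s) (deriv γ s) := by
  rw [tangentCenter, unitNormal, smul_add, smul_smul, smul_smul]
  congr 2
  ring

/-- A curve in the sphere whose geodesic curvature exceeds `μ > 0` is rolled on by its tangent
`μ`-circles. -/
theorem IsRegularCurve.isRolling {γ : ℝ → R3} (hreg : IsRegularCurve γ) {μ : ℝ} (hμ : 0 < μ)
    (hκ : ∀ s, μ < kappa γ s) :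
    IsRolling (μ / Real.sqrt (1 + μ ^ 2)) γ (deriv γ) (deriv (deriv γ)) (tangentCenter μ γ)
      (fun s => (kappa γ s - μ) / Real.sqrt (1 + μ ^ 2)) := by
  set R := Real.sqrt (1 + μ ^ 2) with hR
  have hR0 : 0 < R := Real.sqrt_pos.2 (by positivity)
  have hR2 : R ^ 2 = 1 + μ ^ 2 := Real.sq_sqrt (by positivity)
  have hsm : ContDiff ℝ (⊤ : ℕ∞) γ := hreg.smooth
  have hsm1 : ContDiff ℝ (⊤ : ℕ∞) (deriv γ) := (contDiff_infty_iff_deriv.1 hsm).2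
  have hsm2 : ContDiff ℝ (⊤ : ℕ∞) (deriv (deriv γ)) := (contDiff_infty_iff_deriv.1 hsm1).2
  have hd : ∀ s, HasDerivAt γ (deriv γ s) s := fun s =>
    ((contDiff_infty_iff_deriv.1 hsm).1 s).hasDerivAt
  have hd1 : ∀ s, HasDerivAt (deriv γ) (deriv (deriv γ) s) s := fun s =>
    ((contDiff_infty_iff_deriv.1 hsm1).1 s).hasDerivAt
  have hvγ : ∀ s, dot3 (deriv γ s) (γ s) = 0 := by
    intro s
    have h1 := hasDerivAt_dot3 (hd s) (hd s)
    simp only [hreg.sphere] at h1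
    have h2 := h1.unique (hasDerivAt_const s 1)
    rw [dot3_comm (γ s)] at h2
    linarith
  have hspeed : ∀ s, 0 < dot3 (deriv γ s) (deriv γ s) := fun s => dot3_self_pos (hreg.reg s)
  have hρ : ∀ s, 0 < norm3 (deriv γ s) := fun s => norm3_pos (hreg.reg s)
  have hcross : ∀ a b : R3, dot3 a (cross3 a b) = 0 ∧ dot3 b (cross3 a b) = 0 ∧
      dot3 (cross3 a b) (cross3 a b) = dot3 a a * dot3 b b - dot3 a b ^ 2 := by
    intro a b
    simp only [dot3, cross3]
    refine ⟨?_, ?_, ?_⟩ <;> simp <;> ring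
  have hheight : ∀ s, dot3 (γ s) (tangentCenter μ γ s) = μ / R := by
    intro s
    rw [tangentCenter_eq, dot3_add_right, dot3_smul_right, dot3_smul_right, hreg.sphere,
      (hcross _ _).1]
    ring
  have htangent : ∀ s, dot3 (deriv γ s) (tangentCenter μ γ s) = 0 := by
    intro s
    rw [tangentCenter_eq, dot3_add_right, dot3_smul_right, dot3_smul_right, hvγ,
      (hcross _ _).2.1]
    ring
  have hsphere_o : ∀ s, dot3 (tangentCenter μ γ s) (tangentCenter μ γ s) = 1 := by
    intro s
    rw [tangentCenter_eq, dot3_add_right, dot3_smul_right, dot3_smul_right, dot3_add_left,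
      dot3_add_left, dot3_smul_left, dot3_smul_left, dot3_smul_left, dot3_smul_left,
      dot3_comm (cross3 _ _) (γ s), (hcross _ _).1, (hcross _ _).2.2, hreg.sphere,
      dot3_comm (γ s), hvγ, ← norm3_sq, ← hR]
    have := (hρ s).ne'
    field_simp
    rw [hR2]; ring
  have hdiff_o : ∀ s, DifferentiableAt ℝ (tangentCenter μ γ) s := by
    intro s
    have h1 : DifferentiableAt ℝ (fun s => norm3 (deriv γ s)) s :=
      (hasDerivAt_dot3 (hd1 s) (hd1 s)).differentiableAt.sqrt (hspeed s).ne'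
    have h2 : DifferentiableAt ℝ (fun s => cross3 (γ s) (deriv γ s)) s := by
      have h3 := differentiableAt_pi.1 (hd s).differentiableAt
      have h4 := differentiableAt_pi.1 (hd1 s).differentiableAt
      refine differentiableAt_pi.2 fun i => ?_
      fin_cases i
      · exact ((h3 1).mul (h4 2)).sub ((h3 2).mul (h4 1))
      · exact ((h3 2).mul (h4 0)).sub ((h3 0).mul (h4 2))
      · exact ((h3 0).mul (h4 1)).sub ((h3 1).mul (h4 0))
    have h5 : DifferentiableAt ℝ (fun s => μ • γ s + unitNormal γ s) s :=
      ((hd s).differentiableAt.const_smul μ).add ((h1.inv (hρ s).ne').smul h2)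
    exact h5.const_smul (Real.sqrt (1 + μ ^ 2))⁻¹
  have hderiv_o : ∀ s, deriv (tangentCenter μ γ) s = -((kappa γ s - μ) / R) • deriv γ s := by
    intro s
    have ho := (hdiff_o s).hasDerivAt
    set o' := deriv (tangentCenter μ γ) s
    have h1 : dot3 o' (tangentCenter μ γ s) = 0 := by
      have h1 := hasDerivAt_dot3 ho ho
      simp only [hsphere_o] at h1
      have h2 := h1.unique (hasDerivAt_const s 1)
      rw [dot3_comm (tangentCenter μ γ s)] at h2
      linarith
    have h2 : dot3 (γ s) o' = 0 := by
      have h1 := hasDerivAt_dot3 (hd s) ho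
      simp only [hheight, htangent] at h1
      have h2 := h1.unique (hasDerivAt_const s _)
      linarith
    have h3 : dot3 (deriv (deriv γ) s) (tangentCenter μ γ s) + dot3 (deriv γ s) o' = 0 := by
      have h1 := hasDerivAt_dot3 (hd1 s) ho
      simp only [htangent] at h1
      exact h1.unique (hasDerivAt_const s _)
    have h4 : dot3 (deriv (deriv γ) s) (γ s) = -dot3 (deriv γ s) (deriv γ s) := by
      have h1 := hasDerivAt_dot3 (hd1 s) (hd s)
      simp only [hvγ] at h1
      have h2 := h1.unique (hasDerivAt_const s 0)
      linarith
    have h5 : dot3 (deriv (deriv γ) s) (cross3 (γ s) (deriv γ s)) =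
        kappa γ s * norm3 (deriv γ s) ^ 3 := by
      rw [kappa, div_mul_cancel₀ _ (pow_pos (hρ s) 3).ne']
      simp [det3, dot3, cross3]; ring
    have hρ' := (hρ s).ne'
    set z := o' + ((kappa γ s - μ) / R) • deriv γ s with hz
    have hzγ : dot3 z (γ s) = 0 := by
      rw [hz, dot3_add_left, dot3_smul_left, dot3_comm, h2, hvγ]; ring
    have hzo : dot3 z (tangentCenter μ γ s) = 0 := by
      rw [hz, dot3_add_left, dot3_smul_left, h1, htangent]; ring
    have hzv : dot3 z (deriv γ s) = 0 := by
      rw [tangentCenter_eq, dot3_add_right, dot3_smul_right, dot3_smul_right, h4, h5,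
        ← norm3_sq, ← hR] at h3
      rw [hz, dot3_add_left, dot3_smul_left, dot3_comm o', ← norm3_sq]
      field_simp at h3 ⊢
      linarith
    have hzc : dot3 z (cross3 (γ s) (deriv γ s)) = 0 := by
      rw [tangentCenter_eq, dot3_add_right, dot3_smul_right, dot3_smul_right, hzγ, ← hR] at hzo
      have : R⁻¹ * (norm3 (deriv γ s))⁻¹ ≠ 0 := by positivity
      simpa [this, hρ', hR0.ne'] using hzo
    have hz0 : z = 0 := by
      apply eq_zero_of_dot3_self
      have := det3_mul_dot3 (γ s) (deriv γ s) (cross3 (γ s) (deriv γ s)) z z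
      rw [hzγ, hzv, hzc] at this
      have h6 : det3 (γ s) (deriv γ s) (cross3 (γ s) (deriv γ s)) =
          dot3 (deriv γ s) (deriv γ s) := by
        have : det3 (γ s) (deriv γ s) (cross3 (γ s) (deriv γ s)) =
            dot3 (cross3 (γ s) (deriv γ s)) (cross3 (γ s) (deriv γ s)) := by
          simp [det3, dot3, cross3]; ring
        rw [this, (hcross _ _).2.2, hreg.sphere, dot3_comm (γ s), hvγ]; ring
      rw [h6] at this
      have h7 : dot3 (deriv γ s) (deriv γ s) * dot3 z z = 0 := by linarith
      exact (mul_eq_zero.1 h7).resolve_left (hspeed s).ne'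
    rw [neg_smul]
    exact eq_neg_of_add_eq_zero_left hz0
  exact {
    pos := div_pos hμ hR0
    hasDeriv := hd
    hasDeriv_v := hd1
    continuous_w := hsm2.continuous
    hasDeriv_o := fun s => by
      rw [← hderiv_o s]
      exact (hdiff_o s).hasDerivAt
    lam_pos := fun s => div_pos (sub_pos.2 (hκ s)) hR0
    sphere := hreg.sphere
    sphere_o := hsphere_o
    height := hheight
    tangent := htangent
    speed_pos := hspeed }

/-- A curve touching the boundary of a disk from inside at an interior time is tangent to it there,
and the disk is the tangent disk. -/
theorem IsRolling.center_eq_of_contact {h : ℝ} {γ v w o : ℝ → R3} {lam : ℝ → ℝ}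
    (H : IsRolling h γ v w o lam) {p : R3} (hp : dot3 p p = 1) {a b d : ℝ} (had : a < d)
    (hdb : d < b) (hle : ∀ s ∈ Set.Icc a b, h ≤ dot3 (γ s) p) (hd : dot3 (γ d) p = h) :
    p = o d := by
  have hmin : IsLocalMin (fun s => dot3 (γ s) p) d := by
    filter_upwards [Ioo_mem_nhds had hdb] with s hs
    rw [hd]
    exact hle s ⟨hs.1.le, hs.2.le⟩
  have hcrit := hmin.hasDerivAt_eq_zero (hasDerivAt_dot3_left (H.hasDeriv d) p)
  have hdet : det3 p (γ d) (o d) = 0 :=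
    det3_eq_zero_of_orthogonal (H.speed_pos d) hcrit (H.dot3_v_γ d) (H.tangent d)
  refine (eq_or_eq_reflect (H.sphere d) hp (H.sphere_o d) (by rw [dot3_comm, hd])
    (by rw [dot3_comm, H.height]) hdet).resolve_right fun he => ?_
  obtain ⟨ε, hε, hloc⟩ := H.exists_local_gap d
  obtain ⟨x, hdx, hx⟩ := exists_between (lt_min hdb (lt_add_of_pos_right d hε))
  rw [lt_min_iff] at hx
  have h1 := hloc d (Metric.mem_ball_self hε) x (by
    rw [Metric.mem_ball, Real.dist_eq, abs_of_pos (sub_pos.2 hdx)]; linarith) hdx.ne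
  have h2 := hle x ⟨by linarith, hx.1.le⟩
  rw [he, dot3_sub_right, dot3_smul_right] at h2
  nlinarith [H.pos, dot3_le_one (H.sphere x) (H.sphere d)]

lemma det3_rot3 (p x : R3) (θ : ℝ) :
    det3 x p (rot3 p θ x) = Real.sin θ * (dot3 p x ^ 2 - dot3 x x * dot3 p p) := by
  simp only [det3, rot3, dot3, cross3, Pi.add_apply, Pi.smul_apply, smul_eq_mul, Matrix.cons_val]
  ring

lemma dot3_rot3 (p x o : R3) (θ : ℝ) : dot3 (rot3 p θ x) o = Real.cos θ * dot3 x o +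
    Real.sin θ * dot3 (cross3 p x) o + (1 - Real.cos θ) * dot3 p x * dot3 p o := by
  simp only [rot3, dot3_add_left, dot3_smul_left]

lemma dot3_rot3_self {p x : R3} (hp : dot3 p p = 1) (hx : dot3 x x = 1) (θ : ℝ) :
    dot3 (rot3 p θ x) (rot3 p θ x) = 1 := by
  have h1 : dot3 (rot3 p θ x) (rot3 p θ x) = Real.cos θ ^ 2 * dot3 x x +
      Real.sin θ ^ 2 * (dot3 p p * dot3 x x - dot3 p x ^ 2) +
      (1 - Real.cos θ) ^ 2 * dot3 p x ^ 2 * dot3 p p +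
      2 * Real.cos θ * (1 - Real.cos θ) * dot3 p x ^ 2 := by
    simp only [rot3, dot3, cross3, Pi.add_apply, Pi.smul_apply, smul_eq_mul, Matrix.cons_val]
    ring
  rw [h1, hp, hx, Real.sin_sq]; ring

lemma eq_of_affine_on_circle {A B k x y x₁ y₁ x₂ y₂ : ℝ} (hA : 0 < A) (h : A * x + B * y = k)
    (h₁ : A * x₁ + B * y₁ = k) (h₂ : A * x₂ + B * y₂ = k) (hc : x ^ 2 + y ^ 2 = 1)
    (hc₁ : x₁ ^ 2 + y₁ ^ 2 = 1) (hc₂ : x₂ ^ 2 + y₂ ^ 2 = 1) (hne : y₁ ≠ y₂) :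
    x = x₁ ∧ y = y₁ ∨ x = x₂ ∧ y = y₂ := by
  have hsnd : y = y₁ ∨ y = y₂ := by
    by_contra! hcon
    have e1 : (y - y₁) * ((A ^ 2 + B ^ 2) * (y + y₁) - 2 * k * B) = 0 := by
      have hx : A * x = k - B * y := by linarith
      have hx₁ : A * x₁ = k - B * y₁ := by linarith
      linear_combination A ^ 2 * hc - A ^ 2 * hc₁ - (A * x + k - B * y) * hx
        + (A * x₁ + k - B * y₁) * hx₁
    have e2 : (y - y₂) * ((A ^ 2 + B ^ 2) * (y + y₂) - 2 * k * B) = 0 := by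
      have hx : A * x = k - B * y := by linarith
      have hx₂ : A * x₂ = k - B * y₂ := by linarith
      linear_combination A ^ 2 * hc - A ^ 2 * hc₂ - (A * x + k - B * y) * hx
        + (A * x₂ + k - B * y₂) * hx₂
    have e3 := (mul_eq_zero.1 e1).resolve_left (sub_ne_zero.2 hcon.1)
    have e4 := (mul_eq_zero.1 e2).resolve_left (sub_ne_zero.2 hcon.2)
    have e5 : (A ^ 2 + B ^ 2) * (y₁ - y₂) = 0 := by linarith
    exact sub_ne_zero.2 hne ((mul_eq_zero.1 e5).resolve_left (by positivity))
  rcases hsnd with rfl | rfl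
  · exact Or.inl ⟨mul_left_cancel₀ hA.ne' (by linarith), rfl⟩
  · exact Or.inr ⟨mul_left_cancel₀ hA.ne' (by linarith), rfl⟩

/-- A circular arc longer than half a turn whose end points lie in a disk of the same radius
crosses the boundary of that disk exactly twice. -/
theorem arc_inter_circle {h θ : ℝ} {p o x : R3} (hh : 0 < h) (hh1 : h < 1) (hp : dot3 p p = 1)
    (hx : dot3 x x = 1) (hpx : dot3 p x = h) (hpo : dot3 p o < 1)
    (hxo : h ≤ dot3 x o) (hyo : h < dot3 (rot3 p θ x) o) (hθ : θ ∈ Set.Ioo 0 (2 * Real.pi))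
    (hsin : Real.sin θ < 0) :
    ∃ Y Z : R3, Y ≠ Z ∧ ((fun τ => rot3 p τ x) '' Set.Icc 0 θ) ∩
      {y | dot3 y y = 1 ∧ dot3 y o = h} = {Y, Z} := by
  have hπ : Real.pi < θ := by
    by_contra! hcon
    exact hsin.not_ge (Real.sin_nonneg_of_nonneg_of_le_pi hθ.1.le hcon)
  have hA : 0 < dot3 x o - h * dot3 p o := by nlinarith
  have hg : ∀ τ, dot3 (rot3 p τ x) o = Real.cos τ * (dot3 x o - h * dot3 p o) +
      Real.sin τ * dot3 (cross3 p x) o + h * dot3 p o := by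
    intro τ
    rw [dot3_rot3, hpx]; ring
  have hgc : Continuous fun τ => dot3 (rot3 p τ x) o := by
    simp only [hg]
    fun_prop
  have hg0 : h ≤ dot3 (rot3 p 0 x) o := by
    rw [hg]; simpa using hxo
  have hgπ : dot3 (rot3 p Real.pi x) o < h := by
    rw [hg, Real.cos_pi, Real.sin_pi]; nlinarith
  obtain ⟨τ₁, ⟨h₁0, h₁π⟩, hz₁⟩ := intermediate_value_Icc' Real.pi_pos.le hgc.continuousOn
    (show h ∈ Set.Icc _ _ from ⟨hgπ.le, hg0⟩)
  obtain ⟨τ₂, ⟨h₂π, h₂θ⟩, hz₂⟩ := intermediate_value_Icc hπ.le hgc.continuousOn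
    (show h ∈ Set.Icc _ _ from ⟨hgπ.le, hyo.le⟩)
  simp only at hz₁ hz₂
  have hs₁ : 0 ≤ Real.sin τ₁ := Real.sin_nonneg_of_nonneg_of_le_pi h₁0 h₁π
  have hs₂ : Real.sin τ₂ < 0 := by
    have h1 : Real.pi < τ₂ := h₂π.lt_of_ne (by rintro rfl; exact hgπ.ne hz₂)
    have h2 := Real.sin_pos_of_pos_of_lt_pi (sub_pos.2 h1) (by linarith [hθ.2])
    rw [Real.sin_sub_pi] at h2
    linarith
  have hsne : Real.sin τ₁ ≠ Real.sin τ₂ := by linarith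
  refine ⟨rot3 p τ₁ x, rot3 p τ₂ x, fun he => ?_, ?_⟩
  · have h1 := det3_rot3 p x τ₁
    rw [he, det3_rot3, hpx, hx, hp] at h1
    refine hsne (mul_right_cancel₀ ?_ h1.symm)
    nlinarith
  · ext y
    simp only [Set.mem_inter_iff, Set.mem_image, Set.mem_ofPred_eq, Set.mem_insert_iff,
      Set.mem_singleton_iff]
    constructor
    · rintro ⟨⟨τ, -, rfl⟩, -, hz⟩
      rw [hg] at hz hz₁ hz₂
      rcases eq_of_affine_on_circle (k := h - h * dot3 p o) hA
        (by linarith : _ * Real.cos τ + dot3 (cross3 p x) o * Real.sin τ = _)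
        (by linarith : _ * Real.cos τ₁ + dot3 (cross3 p x) o * Real.sin τ₁ = _)
        (by linarith : _ * Real.cos τ₂ + dot3 (cross3 p x) o * Real.sin τ₂ = _)
        (Real.cos_sq_add_sin_sq τ) (Real.cos_sq_add_sin_sq τ₁) (Real.cos_sq_add_sin_sq τ₂) hsne
        with ⟨h1, h2⟩ | ⟨h1, h2⟩
      · left; simp only [rot3, h1, h2]
      · right; simp only [rot3, h1, h2]
    · rintro (rfl | rfl)
      · exact ⟨⟨τ₁, ⟨h₁0, h₁π.trans hπ.le⟩, rfl⟩, dot3_rot3_self hp hx _, hz₁⟩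
      · exact ⟨⟨τ₂, ⟨Real.pi_pos.le.trans h₂π, h₂θ⟩, rfl⟩, dot3_rot3_self hp hx _, hz₂⟩

lemma closure_muDisk_subset (μ : ℝ) (o : R3) :
    closure (muDisk μ o) ⊆ {x | μ / Real.sqrt (1 + μ ^ 2) ≤ dot3 x o} :=
  closure_minimal (fun _ hx => hx.2.le)
    (isClosed_le continuous_const (continuous_id.dot3 continuous_const))

lemma det3_tangent_frame {a v : R3} (ha : dot3 a a = 1) (hv : dot3 v a = 0) (x : R3) (h k : ℝ) :
    det3 x (h • a + k • cross3 a v) a = k * dot3 x v := by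
  have h1 : det3 x (h • a + k • cross3 a v) a =
      k * (dot3 x v * dot3 a a - dot3 x a * dot3 v a) := by
    simp only [det3, dot3, cross3, Pi.add_apply, Pi.smul_apply, smul_eq_mul, Matrix.cons_val]
    ring
  rw [h1, ha, hv]; ring

theorem stmt10 (μ : ℝ) (γ1 : ℝ → R3) (l a1 b1 c1 d1 : ℝ) (o : R3)
    (hμ : 0 < μ) (hreg : IsRegularCurve γ1) (hper : HasPeriod γ1 l)
    (hκ : ∀ s, μ < kappa γ1 s) (hint : b1 - a1 < l)
    (hshell : IsNegativeShell γ1 a1 b1)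
    (ho : dot3 o o = 1)
    (hin : γ1 '' Set.Icc a1 b1 ⊆ closure (muDisk μ o))
    (horder : a1 < c1 ∧ c1 < d1 ∧ d1 < b1)
    (hPQ : γ1 d1 ≠ γ1 c1)
    (hmeet : muCircle μ o ∩ γ1 '' Set.Icc a1 b1 = {γ1 d1, γ1 c1})
    (t x : ℝ) (ht : t ∈ Set.Icc d1 b1) (hx : x ∈ Set.Icc d1 b1) (hxt : x ≠ t)
    (hX : γ1 x ∈ muCircle μ (tangentCenter μ γ1 t)) :
    (t < x → ∀ θx ∈ Set.Ioo (0 : ℝ) (2 * Real.pi),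
      rot3 (tangentCenter μ γ1 t) θx (γ1 t) = γ1 x →
      ∃ Y Z : R3, Y ≠ Z ∧
        ((fun θ => rot3 (tangentCenter μ γ1 t) θ (γ1 t)) '' Set.Icc 0 θx) ∩ muCircle μ o
          = {Y, Z}) ∧
    (x < t → ∀ θx ∈ Set.Ioo (0 : ℝ) (2 * Real.pi),
      rot3 (tangentCenter μ γ1 t) θx (γ1 x) = γ1 t →
      ∃ Y Z : R3, Y ≠ Z ∧
        ((fun θ => rot3 (tangentCenter μ γ1 t) θ (γ1 x)) '' Set.Icc 0 θx) ∩ muCircle μ o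
          = {Y, Z}) := by
  set h := μ / Real.sqrt (1 + μ ^ 2) with hh
  set k : ℝ → ℝ := fun s => (Real.sqrt (1 + μ ^ 2))⁻¹ * (norm3 (deriv γ1 s))⁻¹ with hk
  have H := hreg.isRolling hμ hκ
  rw [← hh] at H
  have hk0 : ∀ s, 0 < k s := fun s =>
    mul_pos (inv_pos.2 (Real.sqrt_pos.2 (by positivity))) (inv_pos.2 (norm3_pos (hreg.reg s)))
  obtain ⟨⟨-, hinj, hab, -⟩, hneg⟩ := hshell
  obtain ⟨hac, hcd, hdb⟩ := horder
  have hle : ∀ s ∈ Set.Icc a1 b1, h ≤ dot3 (γ1 s) o := fun s hs =>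
    closure_muDisk_subset μ o (hin (Set.mem_image_of_mem _ hs))
  have hd : γ1 d1 ∈ muCircle μ o :=
    (hmeet.symm ▸ Set.mem_insert _ _ : γ1 d1 ∈ muCircle μ o ∩ γ1 '' Set.Icc a1 b1).1
  have hc : γ1 c1 ∈ muCircle μ o :=
    (hmeet.symm ▸ Set.mem_insert_of_mem _ rfl : γ1 c1 ∈ muCircle μ o ∩ γ1 '' Set.Icc a1 b1).1
  have hod : o = tangentCenter μ γ1 d1 :=
    H.center_eq_of_contact ho (hac.trans hcd) hdb hle hd.2
  have hoc : o = tangentCenter μ γ1 c1 :=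
    H.center_eq_of_contact ho hac (hcd.trans hdb) hle hc.2
  have hgt : ∀ s ∈ Set.Icc a1 b1, γ1 s ≠ γ1 d1 → γ1 s ≠ γ1 c1 → h < dot3 (γ1 s) o := by
    intro s hs hsd hsc
    refine (hle s hs).lt_of_ne fun he => ?_
    have hmem : γ1 s ∈ muCircle μ o ∩ γ1 '' Set.Icc a1 b1 :=
      ⟨⟨hreg.sphere s, he.symm⟩, Set.mem_image_of_mem _ hs⟩
    rw [hmeet] at hmem
    exact hmem.elim hsd hsc
  have hne : ∀ s ∈ Set.Ico a1 b1, s ≠ d1 → s ≠ c1 → h < dot3 (γ1 s) o :=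
    fun s hs hsd hsc => hgt s ⟨hs.1, hs.2.le⟩
      (fun he => hsd (hinj hs ⟨(hac.trans hcd).le, hdb⟩ he))
      (fun he => hsc (hinj hs ⟨hac.le, hcd.trans hdb⟩ he))
  have hgt_c : ∀ s ∈ Set.Ico a1 c1, h < dot3 (γ1 s) o := fun s hs =>
    hne s ⟨hs.1, hs.2.trans (hcd.trans hdb)⟩ (hs.2.trans hcd).ne hs.2.ne
  have hgt_d : ∀ s ∈ Set.Ioc d1 b1, h < dot3 (γ1 s) o := by
    rintro s ⟨hs, hsb⟩
    rcases hsb.eq_or_lt with rfl | hsb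
    · rw [← hab]
      exact hgt_c a1 ⟨le_rfl, hac⟩
    · exact hne s ⟨(hac.trans (hcd.trans hs)).le, hsb⟩ hs.ne' (hcd.trans hs).ne'
  obtain ⟨hgap, hpos⟩ := H.incidence_pos hac hcd hdb hk0 (tangentCenter_eq μ γ1) hinj hab hneg
    (hoc.symm.trans hod) (hod ▸ hgt_d) (hod ▸ hgt_c)
  refine ⟨fun htx => absurd hX.2 (hgap t x ht.1 htx hx.2).ne', fun hxlt θ hθ hrot => ?_⟩
  have hh1 : h < 1 := by
    rw [hh, div_lt_one (Real.sqrt_pos.2 (by positivity))]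
    exact Real.lt_sqrt_of_sq_lt (by linarith)
  have hpX : dot3 (tangentCenter μ γ1 t) (γ1 x) = h := by rw [dot3_comm]; exact hX.2
  have hto : h < dot3 (γ1 t) o := hgt_d t ⟨hx.1.trans_lt hxlt, ht.2⟩
  have hsin : Real.sin θ < 0 := by
    have h1 := det3_rot3 (tangentCenter μ γ1 t) (γ1 x) θ
    rw [hrot, hpX, hreg.sphere, H.sphere_o, tangentCenter_eq, det3_tangent_frame (hreg.sphere t)
      (H.dot3_v_γ t)] at h1
    have h2 := mul_pos (hk0 t) (hpos x t hx.1 hxlt ht.2 hX.2)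
    by_contra! hs
    nlinarith [mul_nonneg hs (by nlinarith [H.pos] : (0 : ℝ) ≤ 1 - h ^ 2)]
  refine arc_inter_circle H.pos hh1 (H.sphere_o t) (hreg.sphere x) hpX
    (dot3_lt_one (H.sphere_o t) ho fun he => ?_)
    (hle x ⟨(hac.trans hcd).le.trans hx.1, hx.2⟩) (hrot.symm ▸ hto) hθ hsin
  rw [← he, H.height] at hto
  exact lt_irrefl _ hto
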